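/- Fix γ₀ ∈ ℝ and a positive integer k. Then, as h → 0 with ε = ε(h) → 0 and ε(h)/√h → ∞, one has E( S_h^{2k}·1_{|σW_h + S_h + hγ₀| ≤ ε} ) = ((C₊+C₋)/(2k−Y))·h·ε^{2k−Y} + (σ²(C₊+C₋)(2k−1−Y)/2)·h²·ε^{2k−Y−2} + O(h³·ε^{2k−4−Y}) + O(h²·ε^{2k−2Y}) + O(ε^{2k−1−Y}·h^{3/2}·e^{−ε²/(2σ²h)}), the remainder decomposing as a sum of functions with the indicated big-O rates. -/

import Mathlib

open MeasureTheory ProbabilityTheory Filter Asymptotics Set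
open scoped Topology NNReal ENNReal Real

noncomputable section

/-- The Lévy density `s(x) = (C₊·1_{x>0} + C₋·1_{x<0})·q(x)·|x|^{−1−Y}`. -/
def levyDensity (Y Cp Cm : ℝ) (q : ℝ → ℝ) (x : ℝ) : ℝ :=
  (if 0 < x then Cp else if x < 0 then Cm else 0) * q x * |x| ^ (-1 - Y)

/-- The Lévy measure `ν(dx) = s(x) dx`. -/
def levyMeasure (Y Cp Cm : ℝ) (q : ℝ → ℝ) : Measure ℝ :=
  volume.withDensity fun x => ENNReal.ofReal (levyDensity Y Cp Cm q x)

/-- The Lévy exponent `ψ_J(u) = ibu + ∫ (e^{iux} − 1 − iux·1_{|x|≤1}) ν(dx)`. -/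
def psiJ (b Y Cp Cm : ℝ) (q : ℝ → ℝ) (u : ℝ) : ℂ :=
  Complex.I * b * u +
    ∫ x : ℝ,
      (Complex.exp (Complex.I * u * x) - 1 - (if |x| ≤ 1 then Complex.I * u * x else 0))
      ∂(levyMeasure Y Cp Cm q)

/-- The scale parameter `ς = ((C₊+C₋)Γ(−Y)|cos(πY/2)|)^{1/Y}`. -/
def varsigma (Y Cp Cm : ℝ) : ℝ :=
  ((Cp + Cm) * Real.Gamma (-Y) * |Real.cos (π * Y / 2)|) ^ (1 / Y)

/-- The stable part of the Lévy exponent: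
`ς^Y |u|^Y (1 − iβ·sgn(u)·tan(πY/2))` with `β = (C₊−C₋)/(C₊+C₋)`. -/
def stablePart (Y Cp Cm : ℝ) (u : ℝ) : ℂ :=
  (varsigma Y Cp Cm ^ Y * |u| ^ Y : ℝ) *
    (1 - Complex.I * ((Cp - Cm) / (Cp + Cm)) * Real.sign u * Real.tan (π * Y / 2))

/-- Characteristic function of `X̃_h`, the time-`h` marginal of a Brownian motion with
variance `σ²` plus an independent strictly `Y`-stable process. -/
def tildeCF (σ Y Cp Cm : ℝ) (h u : ℝ) : ℂ :=
  Complex.exp (-(σ ^ 2 * u ^ 2 * h / 2) - h * stablePart Y Cp Cm u)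


/-- Characteristic function of the strictly `Y`-stable variable `S`. -/
def stableCF (Y Cp Cm : ℝ) (u : ℝ) : ℂ := Complex.exp (-stablePart Y Cp Cm u)

/-- Standard normal density `φ`. -/
def gaussDensity (x : ℝ) : ℝ := (Real.sqrt (2 * π))⁻¹ * Real.exp (-x ^ 2 / 2)

section Auxiliary

open scoped ComplexConjugate


/-- The rotated integrand. -/
def rotG (s Y : ℝ) (q c : ℂ) (ω r : ℝ) : ℂ :=
  Complex.exp (Complex.I * ω * s) * ((r ^ (s - 1) : ℝ) : ℂ) *
    Complex.exp (-(q * Complex.exp (Complex.I * ω) * r +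
      c * Complex.exp (Complex.I * ω * Y) * ((r ^ Y : ℝ) : ℂ)))

def rotF (s Y : ℝ) (q c : ℂ) (ω r : ℝ) : ℂ :=
  Complex.I * (s - q * Complex.exp (Complex.I * ω) * r -
      Y * (c * Complex.exp (Complex.I * ω * Y) * ((r ^ Y : ℝ) : ℂ)))

lemma norm_exp_I_mul (x : ℝ) : ‖Complex.exp (Complex.I * x)‖ = 1 := by
  rw [mul_comm]; exact Complex.norm_exp_ofReal_mul_I x

lemma norm_exp_I_mul2 (x y : ℝ) : ‖Complex.exp (Complex.I * x * y)‖ = 1 := by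
  have := norm_exp_I_mul (x * y)
  push_cast at this
  rw [mul_assoc]; exact this

lemma rotG_norm {s Y : ℝ} (q c : ℂ) (ω : ℝ) {r : ℝ} (hr : 0 < r) :
    ‖rotG s Y q c ω r‖ = r ^ (s - 1) * Real.exp (-(q * Complex.exp (Complex.I * ω) * r +
      c * Complex.exp (Complex.I * ω * Y) * ((r ^ Y : ℝ) : ℂ)).re) := by
  unfold rotG
  rw [norm_mul, norm_mul, norm_exp_I_mul2, Complex.norm_exp, Complex.norm_real, Real.norm_eq_abs,
    abs_of_nonneg (Real.rpow_nonneg hr.le _), one_mul, Complex.neg_re]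

lemma rotG_deriv_omega (s Y : ℝ) (q c : ℂ) (ω r : ℝ) :
    HasDerivAt (fun w : ℝ => rotG s Y q c w r) (rotF s Y q c ω r * rotG s Y q c ω r) ω := by
  unfold rotG rotF
  have h0 : HasDerivAt (fun w : ℝ => (w : ℂ)) 1 ω := Complex.ofRealCLM.hasDerivAt
  have h1 : HasDerivAt (fun w : ℝ => Complex.I * w) (Complex.I * 1) ω := h0.const_mul _
  have h2 := (h1.mul_const (s : ℂ)).cexp
  have h3 := h1.cexp
  have h4 := (h1.mul_const (Y : ℂ)).cexp
  have h5 := (((h3.const_mul q).mul_const (r : ℂ)).add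
    ((h4.const_mul c).mul_const ((r ^ Y : ℝ) : ℂ))).neg.cexp
  have h6 := (h2.mul_const ((r ^ (s - 1) : ℝ) : ℂ)).mul h5
  refine h6.congr_deriv ?_
  simp only [Pi.add_apply, Pi.neg_apply]
  ring

lemma rotG_deriv_r (s Y : ℝ) (q c : ℂ) (ω : ℝ) {r : ℝ} (hr : 0 < r) :
    HasDerivAt (fun w : ℝ => Complex.I * w * rotG s Y q c ω w)
      (rotF s Y q c ω r * rotG s Y q c ω r) r := by
  unfold rotG rotF
  have h0 : HasDerivAt (fun w : ℝ => (w : ℂ)) 1 r := Complex.ofRealCLM.hasDerivAt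
  have hs : HasDerivAt (fun w : ℝ => ((w ^ (s - 1) : ℝ) : ℂ)) (((s - 1) * r ^ (s - 1 - 1) : ℝ) : ℂ) r :=
    (Real.hasDerivAt_rpow_const (Or.inl hr.ne')).ofReal_comp
  have hY : HasDerivAt (fun w : ℝ => ((w ^ Y : ℝ) : ℂ)) ((Y * r ^ (Y - 1) : ℝ) : ℂ) r :=
    (Real.hasDerivAt_rpow_const (Or.inl hr.ne')).ofReal_comp
  have h5 := ((h0.const_mul (q * Complex.exp (Complex.I * ω))).add
    (hY.const_mul (c * Complex.exp (Complex.I * ω * Y)))).neg.cexp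
  have h6 := (h0.const_mul Complex.I).mul ((hs.const_mul (Complex.exp (Complex.I * ω * s))).mul h5)
  refine h6.congr_deriv ?_
  simp only [Pi.add_apply, Pi.neg_apply, Pi.mul_apply]
  have hrC : (r : ℂ) ≠ 0 := by exact_mod_cast hr.ne'
  have e1 : ((r ^ (s - 1) : ℝ) : ℂ) = r * ((r ^ (s - 1 - 1) : ℝ) : ℂ) := by
    rw [Real.rpow_sub_one hr.ne' (s - 1)]
    push_cast
    field_simp
  have e2 : ((r ^ Y : ℝ) : ℂ) = r * ((r ^ (Y - 1) : ℝ) : ℂ) := by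
    rw [Real.rpow_sub_one hr.ne' Y]
    push_cast
    field_simp
  rw [e1, e2]
  push_cast
  ring

lemma rotG_cont (s Y : ℝ) (hs : 1 ≤ s) (hY : 0 < Y) (q c : ℂ) (ω : ℝ) : Continuous (rotG s Y q c ω) := by
  unfold rotG
  have h1 : Continuous fun r : ℝ => r ^ (s - 1) := Real.continuous_rpow_const (by linarith)
  have h2 : Continuous fun r : ℝ => r ^ Y := Real.continuous_rpow_const hY.le
  fun_prop

lemma rotF_cont (s Y : ℝ) (hY : 0 < Y) (q c : ℂ) (ω : ℝ) : Continuous (rotF s Y q c ω) := by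
  unfold rotF
  have h2 : Continuous fun r : ℝ => r ^ Y := Real.continuous_rpow_const hY.le
  fun_prop

lemma rotF_norm {s Y : ℝ} (hs : 1 ≤ s) (hY : 0 < Y) (q c : ℂ) (ω : ℝ) {r : ℝ} (hr : 0 < r) :
    ‖rotF s Y q c ω r‖ ≤ s + ‖q‖ * r + Y * ‖c‖ * r ^ Y := by
  unfold rotF
  rw [norm_mul, Complex.norm_I, one_mul]
  refine (norm_sub_le _ _).trans ?_
  refine add_le_add ((norm_sub_le _ _).trans ?_) ?_
  · rw [norm_mul, norm_mul, norm_exp_I_mul, Complex.norm_real, Complex.norm_real]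
    simp [abs_of_pos hr, abs_of_pos (by linarith : 0 < s)]
  · rw [norm_mul, norm_mul, norm_mul, norm_exp_I_mul2, Complex.norm_real, Complex.norm_real]
    simp [abs_of_pos hY, abs_of_pos (Real.rpow_pos_of_pos hr Y), mul_assoc]

lemma rot_const {s Y m δ : ℝ} (hs : 1 ≤ s) (hY : 0 < Y) (hm : 0 < m) (hδ : 0 < δ) (q c : ℂ)
    {a b : ℝ} (hab : a ≤ b)
    (hdom : ∀ ω ∈ Icc a b, ∀ r : ℝ, 0 < r → δ * r ^ m ≤ (q * Complex.exp (Complex.I * ω) * r +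
      c * Complex.exp (Complex.I * ω * Y) * ((r ^ Y : ℝ) : ℂ)).re) :
    ∫ r in Ioi (0:ℝ), rotG s Y q c a r = ∫ r in Ioi (0:ℝ), rotG s Y q c b r := by
  have hGb : ∀ ω ∈ Icc a b, ∀ r : ℝ, 0 < r →
      ‖rotG s Y q c ω r‖ ≤ r ^ (s - 1) * Real.exp (-δ * r ^ m) := by
    intro ω hω r hr
    rw [rotG_norm q c ω hr]
    gcongr
    have := hdom ω hω r hr
    linarith
  have hintg : ∀ t : ℝ, 0 ≤ t → IntegrableOn (fun r : ℝ => r ^ t * Real.exp (-δ * r ^ m)) (Ioi 0) :=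
    fun t ht => integrableOn_rpow_mul_exp_neg_mul_rpow (by linarith) hm hδ
  have hGmeas : ∀ ω, AEStronglyMeasurable (rotG s Y q c ω) (volume.restrict (Ioi (0:ℝ))) :=
    fun ω => (rotG_cont s Y hs hY q c ω).aestronglyMeasurable
  have hcont : ContinuousOn (fun ω => ∫ r in Ioi (0:ℝ), rotG s Y q c ω r) (Icc a b) := by
    refine continuousOn_of_dominated (bound := fun r => r ^ (s - 1) * Real.exp (-δ * r ^ m))
      (fun ω _ => hGmeas ω) ?_ (hintg _ (by linarith)) ?_
    · intro ω hω
      filter_upwards [ae_restrict_mem measurableSet_Ioi] with r hr using hGb ω hω r hr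
    · refine Eventually.of_forall fun r => ?_
      exact fun ω _ => (rotG_deriv_omega s Y q c ω r).continuousAt.continuousWithinAt
  set bd : ℝ → ℝ := fun r => s * (r ^ (s - 1) * Real.exp (-δ * r ^ m)) +
    ‖q‖ * (r ^ s * Real.exp (-δ * r ^ m)) + Y * ‖c‖ * (r ^ (Y + s - 1) * Real.exp (-δ * r ^ m)) with hbd
  have hbdint : IntegrableOn bd (Ioi 0) :=
    (((hintg (s-1) (by linarith)).const_mul s).add ((hintg s (by linarith)).const_mul ‖q‖)).add
      ((hintg (Y+s-1) (by linarith)).const_mul (Y * ‖c‖))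
  have hFG : ∀ ω ∈ Icc a b, ∀ r : ℝ, 0 < r → ‖rotF s Y q c ω r * rotG s Y q c ω r‖ ≤ bd r := by
    intro ω hω r hr
    rw [norm_mul]
    refine (mul_le_mul (rotF_norm hs hY q c ω hr) (hGb ω hω r hr) (norm_nonneg _) (by positivity)).trans ?_
    apply le_of_eq
    have e1 : r ^ s = r * r ^ (s - 1) := by
      rw [Real.rpow_sub_one hr.ne']; field_simp
    have e2 : r ^ (Y + s - 1) = r ^ Y * r ^ (s - 1) := by
      rw [← Real.rpow_add hr]; ring_nf
    simp only [hbd, e1, e2]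
    ring
  have hder : ∀ ω ∈ Ioo a b, HasDerivAt (fun ω => ∫ r in Ioi (0:ℝ), rotG s Y q c ω r) 0 ω := by
    intro ω hω
    have hω' : ω ∈ Icc a b := Ioo_subset_Icc_self hω
    have key := hasDerivAt_integral_of_dominated_loc_of_deriv_le (𝕜 := ℝ) (μ := volume.restrict (Ioi (0:ℝ)))
      (F := rotG s Y q c) (F' := fun ω r => rotF s Y q c ω r * rotG s Y q c ω r) (bound := bd)
      (Ioo_mem_nhds hω.1 hω.2) (Eventually.of_forall hGmeas)
      ((hintg (s-1) (by linarith)).mono' (hGmeas ω) (by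
        filter_upwards [ae_restrict_mem measurableSet_Ioi] with r hr using hGb ω hω' r hr))
      (((rotF_cont s Y hY q c ω).mul (rotG_cont s Y hs hY q c ω)).aestronglyMeasurable)
      (by
        filter_upwards [ae_restrict_mem measurableSet_Ioi] with r hr w hw using
          hFG w (Ioo_subset_Icc_self hw) r hr)
      hbdint
      (Eventually.of_forall fun r w _ => rotG_deriv_omega s Y q c w r)
    have h0 : ∫ r in Ioi (0:ℝ), rotF s Y q c ω r * rotG s Y q c ω r = 0 := by
      rw [integral_Ioi_of_hasDerivAt_of_tendsto (f := fun w : ℝ => Complex.I * w * rotG s Y q c ω w)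
        (m := 0) _ (fun r hr => rotG_deriv_r s Y q c ω hr) key.1 _]
      · simp
      · have := rotG_cont s Y hs hY q c ω
        exact Continuous.continuousWithinAt (by fun_prop)
      · refine squeeze_zero_norm' (a := fun r : ℝ => r ^ s * Real.exp (-δ * r ^ m)) ?_ ?_
        · filter_upwards [eventually_gt_atTop (0:ℝ)] with r hr
          rw [norm_mul, norm_mul, Complex.norm_I, one_mul, Complex.norm_real, Real.norm_eq_abs,
            abs_of_pos hr]
          have e1 : r ^ s = r * r ^ (s - 1) := by
            rw [Real.rpow_sub_one hr.ne']; field_simp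
          rw [e1, mul_assoc]
          exact mul_le_mul_of_nonneg_left (hGb ω hω' r hr) hr.le
        · have h1 := (tendsto_rpow_mul_exp_neg_mul_atTop_nhds_zero (s / m) δ hδ).comp
            (tendsto_rpow_atTop hm)
          refine h1.congr' ?_
          filter_upwards [eventually_gt_atTop (0:ℝ)] with r hr
          simp only [Function.comp]
          rw [← Real.rpow_mul hr.le, mul_div_cancel₀ _ hm.ne']
    rw [h0] at key
    exact key.2
  rcases hab.eq_or_lt with rfl | hab'
  · rfl
  · refine (constant_of_has_deriv_right_zero hcont ?_ b (right_mem_Icc.2 hab)).symm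
    intro x hx
    rcases hx.1.eq_or_lt with rfl | hax
    · refine hasDerivWithinAt_Ici_of_tendsto_deriv (s := Ioo a b)
        (fun y hy => (hder y hy).differentiableAt.differentiableWithinAt)
        ((hcont a (left_mem_Icc.2 hab)).mono Ioo_subset_Icc_self) (Ioo_mem_nhdsGT hab') ?_
      refine tendsto_const_nhds.congr' ?_
      filter_upwards [Ioo_mem_nhdsGT hab'] with y hy using (hder y hy).deriv.symm
    · exact (hder x ⟨hax, hx.2⟩).hasDerivWithinAt



lemma expI_re (w : ℝ) : (Complex.exp (Complex.I * w)).re = Real.cos w := by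
  rw [mul_comm]; exact Complex.exp_ofReal_mul_I_re w

lemma expI_im (w : ℝ) : (Complex.exp (Complex.I * w)).im = Real.sin w := by
  rw [mul_comm]; exact Complex.exp_ofReal_mul_I_im w

lemma gamma_rot {x ω s : ℝ} (hx : 0 < x) (hω0 : 0 ≤ ω) (hω : ω < π / 2) (hs : 1 ≤ s) :
    ∫ r in Ioi (0:ℝ), ((r ^ (s - 1) : ℝ) : ℂ) * Complex.exp (-(x * Complex.exp (Complex.I * ω) * r))
      = Complex.exp (-(Complex.I * ω * s)) * (((1 / x) ^ s * Real.Gamma s : ℝ) : ℂ) := by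
  have hc : 0 < Real.cos ω := Real.cos_pos_of_mem_Ioo ⟨by linarith [Real.pi_pos], hω⟩
  have key := rot_const (s := s) (Y := 1) (m := 1) (δ := x * Real.cos ω) hs one_pos one_pos
    (by positivity) (x : ℂ) 0 hω0 (by
      intro w hw r hr
      simp only [zero_mul, add_zero, Real.rpow_one]
      rw [Complex.re_mul_ofReal, Complex.re_ofReal_mul, expI_re]
      have : Real.cos ω ≤ Real.cos w :=
        Real.cos_le_cos_of_nonneg_of_le_pi hw.1 (by linarith [Real.pi_pos]) hw.2
      gcongr)
  have h1 : ∫ r in Ioi (0:ℝ), rotG s 1 x 0 0 r = (((1 / x) ^ s * Real.Gamma s : ℝ) : ℂ) := by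
    rw [← Real.integral_rpow_mul_exp_neg_mul_Ioi (by linarith) hx]
    refine Eq.trans ?_ integral_complex_ofReal
    refine integral_congr_ae (Eventually.of_forall fun r => ?_)
    simp [rotG]
  have h2 : ∫ r in Ioi (0:ℝ), rotG s 1 x 0 ω r = Complex.exp (Complex.I * ω * s) *
     ∫ r in Ioi (0:ℝ), ((r ^ (s - 1) : ℝ) : ℂ) * Complex.exp (-(x * Complex.exp (Complex.I * ω) * r)) := by
    rw [← integral_const_mul]
    refine integral_congr_ae (Eventually.of_forall fun r => ?_)
    simp [rotG, mul_assoc]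
  rw [← h1, key, h2, ← mul_assoc, ← Complex.exp_add]
  simp

lemma exp_neg_sub_le {w : ℂ} (hw : 0 ≤ w.re) : ‖Complex.exp (-w) - 1 + w‖ ≤ 3 * ‖w‖ ^ 2 := by
  by_cases h : ‖w‖ ≤ 1
  · have := Complex.norm_exp_sub_one_sub_id_le (x := -w) (by simpa using h)
    rw [sub_neg_eq_add, norm_neg] at this
    nlinarith [sq_nonneg ‖w‖]
  · push Not at h
    have h1 : ‖Complex.exp (-w)‖ ≤ 1 := by
      rw [Complex.norm_exp]; simpa using hw
    have := norm_add_le (Complex.exp (-w) - 1) w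
    have h2 := norm_sub_le (Complex.exp (-w)) 1
    simp only [norm_one] at h2
    nlinarith

lemma exists_angle {c : ℂ} (hc : 0 < c.re) (Y : ℝ) : ∃ θ : ℝ, 0 < θ ∧ θ < π / 2 ∧
    ∀ ω ∈ Icc (-θ) 0, c.re / 2 ≤ (c * Complex.exp (Complex.I * ω * Y)).re := by
  have hcont : Continuous fun ω : ℝ => (c * Complex.exp (Complex.I * ω * Y)).re :=
    Complex.continuous_re.comp (by fun_prop)
  have h0 : c.re / 2 < (fun ω : ℝ => (c * Complex.exp (Complex.I * ω * Y)).re) 0 := by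
    simp; linarith
  obtain ⟨d, hd, hd2⟩ := Metric.eventually_nhds_iff.1 (hcont.continuousAt.eventually_const_lt h0)
  refine ⟨min (d / 2) (π / 4), by positivity, ?_, ?_⟩
  · exact (min_le_right _ _).trans_lt (by linarith [Real.pi_pos])
  · intro ω hω
    refine (hd2 ?_).le
    rw [Real.dist_eq, sub_zero, abs_of_nonpos hω.2]
    have := min_le_left (d / 2) (π / 4)
    linarith [hω.1]

lemma K_expand {c : ℂ} (hc : 0 < c.re) {Y : ℝ} (hY1 : 1 < Y) :
    ∃ C : ℝ, 0 ≤ C ∧ ∀ x : ℝ, 0 < x →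
      ‖(∫ r in Ioi (0:ℝ), Complex.exp (-(Complex.I * x * r + c * ((r ^ Y : ℝ) : ℂ))))
        - (-Complex.I * ((1 / x : ℝ) : ℂ) - c * (((1 / x) ^ (1 + Y) * Real.Gamma (1 + Y) : ℝ) : ℂ) *
            Complex.exp (-(Complex.I * (π / 2) * (1 + Y))))‖ ≤ C * x ^ (-1 - 2 * Y) := by
  obtain ⟨θ, hθ0, hθ, hang⟩ := exists_angle hc Y
  have hsin : 0 < Real.sin θ := Real.sin_pos_of_pos_of_lt_pi hθ0 (by linarith)
  refine ⟨3 * ‖c‖ ^ 2 * ((1 / Real.sin θ) ^ (2 * Y + 1) * Real.Gamma (2 * Y + 1)), ?_, ?_⟩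
  · have := Real.Gamma_pos_of_pos (show 0 < 2 * Y + 1 by linarith)
    positivity
  intro x hx
  have key := rot_const (s := 1) (Y := Y) (m := Y) (δ := c.re / 2) le_rfl (by linarith) (by linarith)
    (by linarith) (Complex.I * x) c (a := -θ) (b := 0) (by linarith) (by
      intro w hw r hr
      rw [Complex.add_re, Complex.re_mul_ofReal, Complex.re_mul_ofReal]
      have h1 : c.re / 2 * r ^ Y ≤ (c * Complex.exp (Complex.I * w * Y)).re * r ^ Y := by
        have := hang w hw
        gcongr
      have h2 : 0 ≤ (Complex.I * x * Complex.exp (Complex.I * w)).re * r := by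
        have e : (Complex.I * x * Complex.exp (Complex.I * w)).re = - (x * Real.sin w) := by
          rw [Complex.mul_re, expI_re, expI_im]; simp
        rw [e]
        have : Real.sin w ≤ 0 := Real.sin_nonpos_of_nonpos_of_neg_pi_le hw.2 (by linarith [hw.1])
        nlinarith [mul_nonneg hx.le hr.le]
      linarith)
  have hK : ∫ r in Ioi (0:ℝ), Complex.exp (-(Complex.I * x * r + c * ((r ^ Y : ℝ) : ℂ)))
      = ∫ r in Ioi (0:ℝ), rotG 1 Y (Complex.I * x) c (-θ) r := by
    rw [key]
    refine integral_congr_ae (Eventually.of_forall fun r => ?_)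
    simp [rotG]
  rw [hK]
  set z : ℂ := c * Complex.exp (Complex.I * ((-θ : ℝ) : ℂ) * Y) with hz
  have hzre : 0 ≤ z.re := by
    have := hang (-θ) (left_mem_Icc.2 (by linarith)); linarith
  have hznorm : ‖z‖ = ‖c‖ := by rw [hz, norm_mul, norm_exp_I_mul2, mul_one]
  set ω := π / 2 - θ with hωd
  have hIexp : Complex.I * (x:ℂ) * Complex.exp (Complex.I * ((-θ : ℝ) : ℂ)) =
      x * Complex.exp (Complex.I * (ω : ℂ)) := by
    have : Complex.I = Complex.exp (π / 2 * Complex.I) := (Complex.exp_pi_div_two_mul_I).symm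
    have h2 : Complex.I * (ω : ℂ) = π / 2 * Complex.I + Complex.I * ((-θ : ℝ) : ℂ) := by
      rw [hωd]; push_cast; ring
    rw [h2, Complex.exp_add, ← this]; ring
  set E : ℝ → ℂ := fun r => Complex.exp (-(x * Complex.exp (Complex.I * ω) * r)) with hE
  have hEn : ∀ r : ℝ, ‖E r‖ = Real.exp (-(x * Real.sin θ * r)) := by
    intro r
    rw [hE]; simp only
    rw [Complex.norm_exp, Complex.neg_re, Complex.re_mul_ofReal, Complex.re_ofReal_mul, expI_re, hωd,
      Real.cos_pi_div_two_sub]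
  have hGeq : ∀ r, rotG 1 Y (Complex.I * x) c (-θ) r = Complex.exp (-(Complex.I * θ)) *
      (E r * Complex.exp (-(z * ((r ^ Y : ℝ) : ℂ)))) := by
    intro r
    unfold rotG
    rw [hIexp, ← hz, neg_add, Complex.exp_add]
    simp [hE]
  have hintg : ∀ t : ℝ, 0 ≤ t → IntegrableOn (fun r : ℝ => ((r ^ t : ℝ) : ℂ) * E r) (Ioi 0) := by
    intro t ht
    have h1 := integrableOn_rpow_mul_exp_neg_mul_rpow (s := t) (p := 1) (b := x * Real.sin θ)
      (by linarith) one_pos (by positivity)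
    refine h1.mono' ?_ ?_
    · have : Continuous fun r : ℝ => r ^ t := Real.continuous_rpow_const ht
      exact Continuous.aestronglyMeasurable (by fun_prop)
    · filter_upwards [ae_restrict_mem measurableSet_Ioi] with r hr
      rw [norm_mul, hEn, Complex.norm_real, Real.norm_eq_abs, abs_of_nonneg (Real.rpow_nonneg (le_of_lt hr) _)]
      simp
  have hi0 : IntegrableOn E (Ioi 0) := by simpa using hintg 0 le_rfl
  have hiY := hintg Y (by linarith)
  have hI0 : ∫ r in Ioi (0:ℝ), E r = Complex.exp (-(Complex.I * ω)) * ((1 / x : ℝ) : ℂ) := by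
    have := gamma_rot (s := 1) hx (by linarith : 0 ≤ ω) (by linarith) le_rfl
    simpa using this
  have hIY : ∫ r in Ioi (0:ℝ), ((r ^ Y : ℝ) : ℂ) * E r =
      Complex.exp (-(Complex.I * ω * (1 + Y))) * (((1 / x) ^ (1 + Y) * Real.Gamma (1 + Y) : ℝ) : ℂ) := by
    have := gamma_rot (s := 1 + Y) hx (by linarith : 0 ≤ ω) (by linarith) (by linarith)
    rw [add_sub_cancel_left] at this
    rw [this]; push_cast; rfl
  have hmain : (-Complex.I * ((1 / x : ℝ) : ℂ) - c * (((1 / x) ^ (1 + Y) * Real.Gamma (1 + Y) : ℝ) : ℂ) *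
            Complex.exp (-(Complex.I * (π / 2) * (1 + Y)))) =
      ∫ r in Ioi (0:ℝ), Complex.exp (-(Complex.I * θ)) * (E r - z * (((r ^ Y : ℝ) : ℂ) * E r)) := by
    rw [integral_const_mul, integral_sub hi0 (hiY.const_mul z), integral_const_mul, hI0, hIY, mul_sub]
    congr 1
    · rw [← mul_assoc, ← Complex.exp_add]
      congr 1
      have : -(Complex.I * (θ:ℂ)) + -(Complex.I * (ω:ℂ)) = -(π / 2 * Complex.I) := by
        rw [hωd]; push_cast; ring
      rw [this, Complex.exp_neg, Complex.exp_pi_div_two_mul_I, Complex.inv_I]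
    · rw [hz]
      have : Complex.exp (-(Complex.I * (π / 2) * (1 + Y))) = Complex.exp (-(Complex.I * θ)) *
        Complex.exp (Complex.I * ((-θ : ℝ) : ℂ) * Y) * Complex.exp (-(Complex.I * ω * (1 + Y))) := by
        rw [← Complex.exp_add, ← Complex.exp_add]
        congr 1
        rw [hωd]; push_cast; ring
      rw [this]; ring
  have hGi : IntegrableOn (fun r => rotG 1 Y (Complex.I * x) c (-θ) r) (Ioi 0) := by
    refine hi0.norm.mono' (rotG_cont 1 Y le_rfl (by linarith) _ _ _).aestronglyMeasurable ?_
    filter_upwards [ae_restrict_mem measurableSet_Ioi] with r hr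
    rw [hGeq, norm_mul, norm_mul]
    have h1 : ‖Complex.exp (-(Complex.I * θ))‖ = 1 := by
      have := norm_exp_I_mul (-θ); push_cast at this; rwa [mul_neg] at this
    have h2 : ‖Complex.exp (-(z * ((r ^ Y : ℝ) : ℂ)))‖ ≤ 1 := by
      rw [Complex.norm_exp, Complex.neg_re, Complex.re_mul_ofReal]
      have := mul_nonneg hzre (Real.rpow_nonneg (le_of_lt hr) Y)
      simpa using this
    rw [h1, one_mul]
    exact mul_le_of_le_one_right (norm_nonneg _) h2
  have hsub : IntegrableOn (fun r : ℝ => Complex.exp (-(Complex.I * θ)) *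
      (E r - z * (((r ^ Y : ℝ) : ℂ) * E r))) (Ioi 0) := (hi0.sub (hiY.const_mul z)).const_mul _
  rw [hmain, ← integral_sub hGi hsub]
  have hfin : ∫ r in Ioi (0:ℝ), 3 * ‖c‖ ^ 2 * (r ^ (2 * Y + 1 - 1) * Real.exp (-(x * Real.sin θ * r))) =
     3 * ‖c‖ ^ 2 * ((1 / Real.sin θ) ^ (2 * Y + 1) * Real.Gamma (2 * Y + 1)) * x ^ (-1 - 2 * Y) := by
    rw [integral_const_mul, Real.integral_rpow_mul_exp_neg_mul_Ioi (by linarith) (by positivity)]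
    have : x ^ (-1 - 2 * Y) = (1 / x) ^ (2 * Y + 1) := by
      rw [one_div, Real.inv_rpow hx.le, ← Real.rpow_neg hx.le]; ring_nf
    have e : 1 / (x * Real.sin θ) = (1 / x) * (1 / Real.sin θ) := by field_simp
    rw [this, e, Real.mul_rpow (by positivity) (by positivity)]
    ring
  rw [← hfin]
  refine norm_integral_le_of_norm_le ?_ ?_
  · have h1 := integrableOn_rpow_mul_exp_neg_mul_rpow (s := 2 * Y + 1 - 1) (p := 1) (b := x * Real.sin θ)
      (by linarith) one_pos (by positivity)
    simp only [Real.rpow_one, neg_mul] at h1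
    exact h1.const_mul _
  · filter_upwards [ae_restrict_mem measurableSet_Ioi] with r hr
    have hr : 0 < r := hr
    rw [hGeq, ← mul_sub, norm_mul]
    have h1 : ‖Complex.exp (-(Complex.I * θ))‖ = 1 := by
      have := norm_exp_I_mul (-θ); push_cast at this; rwa [mul_neg] at this
    rw [h1, one_mul]
    have e1 : E r * Complex.exp (-(z * ((r ^ Y : ℝ) : ℂ))) - (E r - z * (((r ^ Y : ℝ) : ℂ) * E r)) =
      E r * (Complex.exp (-(z * ((r ^ Y : ℝ) : ℂ))) - 1 + z * ((r ^ Y : ℝ) : ℂ)) := by ring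
    rw [e1, norm_mul, hEn]
    have h2 : ‖Complex.exp (-(z * ((r ^ Y : ℝ) : ℂ))) - 1 + z * ((r ^ Y : ℝ) : ℂ)‖ ≤ _ :=
      exp_neg_sub_le (by rw [Complex.re_mul_ofReal]; positivity)
    rw [norm_mul, hznorm, Complex.norm_real, Real.norm_eq_abs, abs_of_nonneg (by positivity)] at h2
    refine (mul_le_mul_of_nonneg_left h2 (Real.exp_nonneg _)).trans (le_of_eq ?_)
    have : r ^ (2 * Y + 1 - 1) = (r ^ Y) ^ 2 := by
      rw [← Real.rpow_natCast, ← Real.rpow_mul hr.le]; congr 1; push_cast; ring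
    rw [this]; ring



lemma integrable_of_halves {E : Type*} [NormedAddCommGroup E] [NormedSpace ℝ E] {f : ℝ → E}
    (h1 : IntegrableOn f (Ioi 0)) (h2 : IntegrableOn (fun x => f (-x)) (Ioi 0)) : Integrable f := by
  have h3 : IntegrableOn f (Iic 0) := by
    have hmp : MeasurePreserving (fun x : ℝ => -x) volume volume := Measure.measurePreserving_neg _
    have := (hmp.integrableOn_comp_preimage (s := Iio 0) (f := f) (Homeomorph.neg ℝ).measurableEmbedding).1
      (by simpa [Function.comp_def] using h2)
    rwa [integrableOn_Iic_iff_integrableOn_Iio]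
  rw [← integrableOn_univ, ← Iic_union_Ioi (a := (0:ℝ))]
  exact h3.union h1

lemma integral_halves {E : Type*} [NormedAddCommGroup E] [NormedSpace ℝ E] {f : ℝ → E}
    (h : Integrable f) :
    ∫ x, f x = (∫ x in Ioi (0:ℝ), f x) + ∫ x in Ioi (0:ℝ), f (-x) := by
  rw [integral_comp_neg_Ioi, neg_zero, add_comm,
    intervalIntegral.integral_Iic_add_Ioi h.integrableOn h.integrableOn]

/-- Characteristic function of the stable law with complex parameter `c`. -/
def cfS (c : ℂ) (Y u : ℝ) : ℂ :=
  Complex.exp (-(c * (((max u 0) ^ Y : ℝ) : ℂ) + conj c * (((max (-u) 0) ^ Y : ℝ) : ℂ)))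

lemma cfS_cont (c : ℂ) {Y : ℝ} (hY : 0 < Y) : Continuous (cfS c Y) := by
  unfold cfS
  have h2 : Continuous fun r : ℝ => r ^ Y := Real.continuous_rpow_const hY.le
  have h3 : Continuous fun r : ℝ => (max r 0) ^ Y := h2.comp (by fun_prop)
  have h4 : Continuous fun r : ℝ => (max (-r) 0) ^ Y := h2.comp (by fun_prop)
  fun_prop

lemma cfS_pos (c : ℂ) {Y u : ℝ} (hY : 0 < Y) (hu : 0 < u) :
    cfS c Y u = Complex.exp (-(c * ((u ^ Y : ℝ) : ℂ))) := by
  unfold cfS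
  rw [max_eq_left hu.le, max_eq_right (by linarith), Real.zero_rpow hY.ne']
  simp

lemma cfS_neg (c : ℂ) (Y u : ℝ) : cfS c Y (-u) = conj (cfS c Y u) := by
  unfold cfS
  rw [← Complex.exp_conj]
  congr 1
  simp [add_comm]

lemma cfS_integrableOn {c : ℂ} (hc : 0 < c.re) {Y : ℝ} (hY : 0 < Y) :
    IntegrableOn (cfS c Y) (Ioi 0) := by
  have h1 := integrableOn_rpow_mul_exp_neg_mul_rpow (s := 0) (p := Y) (b := c.re)
      (by linarith) hY hc
  refine h1.mono' (cfS_cont c hY).aestronglyMeasurable ?_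
  filter_upwards [ae_restrict_mem measurableSet_Ioi] with r hr
  rw [cfS_pos c hY hr, Complex.norm_exp, Complex.neg_re, Complex.re_mul_ofReal]
  simp

lemma cfS_integrable {c : ℂ} (hc : 0 < c.re) {Y : ℝ} (hY : 0 < Y) : Integrable (cfS c Y) := by
  refine integrable_of_halves (cfS_integrableOn hc hY) ?_
  simp_rw [cfS_neg]
  have := (cfS_integrableOn hc hY).norm
  refine this.mono' ?_ ?_
  · exact (Complex.continuous_conj.comp (cfS_cont c hY)).aestronglyMeasurable
  · exact Eventually.of_forall fun x => by simp

/-- The density. -/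
def stP (c : ℂ) (Y x : ℝ) : ℝ :=
  (1 / π) * (∫ r in Ioi (0:ℝ), Complex.exp (-(Complex.I * x * r + c * ((r ^ Y : ℝ) : ℂ)))).re

lemma stP_neg (c : ℂ) (Y x : ℝ) : stP c Y (-x) = stP (conj c) Y x := by
  unfold stP
  congr 1
  have h : (∫ r in Ioi (0:ℝ), Complex.exp (-(Complex.I * ((-x : ℝ) : ℂ) * r + c * ((r ^ Y : ℝ) : ℂ)))) =
      conj (∫ r in Ioi (0:ℝ), Complex.exp (-(Complex.I * x * r + conj c * ((r ^ Y : ℝ) : ℂ)))) := by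
    rw [← integral_conj]
    refine integral_congr_ae (Eventually.of_forall fun r => ?_)
    simp only [← Complex.exp_conj]
    congr 1
    simp
  rw [h, Complex.conj_re]

lemma fourier_cfS {c : ℂ} (hc : 0 < c.re) {Y : ℝ} (hY : 0 < Y) (x : ℝ) :
    FourierTransform.fourier (fun ξ : ℝ => cfS c Y (2 * π * ξ)) x = (stP c Y x : ℂ) := by
  rw [Real.fourier_eq']
  have hpi := Real.pi_pos
  have e : ∀ v : ℝ, Complex.exp (((-2 * π * inner ℝ v x : ℝ) : ℂ) * Complex.I) • cfS c Y (2 * π * v) =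
      (fun u : ℝ => Complex.exp (-(Complex.I * x * u)) * cfS c Y u) (2 * π * v) := by
    intro v
    simp only [smul_eq_mul]
    congr 2
    simp
    ring
  simp_rw [e]
  rw [Measure.integral_comp_mul_left (fun u : ℝ => Complex.exp (-(Complex.I * x * u)) * cfS c Y u)]
  have hn : ∀ u : ℝ, ‖Complex.exp (-(Complex.I * x * u))‖ = 1 := by
    intro u
    have := norm_exp_I_mul2 (-x) u
    push_cast at this
    rw [← this]; congr 2; ring
  have hintg : Integrable (fun u : ℝ => Complex.exp (-(Complex.I * x * u)) * cfS c Y u) := by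
    refine (cfS_integrable hc hY).norm.mono' ?_ (Eventually.of_forall fun u => by
      rw [norm_mul, hn, one_mul])
    have := cfS_cont c hY
    exact Continuous.aestronglyMeasurable (by fun_prop)
  rw [integral_halves hintg]
  set K := ∫ r in Ioi (0:ℝ), Complex.exp (-(Complex.I * x * r + c * ((r ^ Y : ℝ) : ℂ))) with hK
  have h1 : ∫ u in Ioi (0:ℝ), Complex.exp (-(Complex.I * x * u)) * cfS c Y u = K := by
    refine setIntegral_congr_fun measurableSet_Ioi fun u hu => ?_
    rw [cfS_pos c hY hu, ← Complex.exp_add]; congr 1; ring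
  have h2 : ∫ u in Ioi (0:ℝ), Complex.exp (-(Complex.I * x * ((-u : ℝ) : ℂ))) * cfS c Y (-u) = conj K := by
    rw [← h1, ← integral_conj]
    refine integral_congr_ae (Eventually.of_forall fun u => ?_)
    simp only
    rw [cfS_neg, map_mul, ← Complex.exp_conj]
    congr 2
    simp
  rw [h1, h2, Complex.add_conj]
  unfold stP
  rw [← hK, abs_of_pos (by positivity), Complex.real_smul]
  push_cast
  field_simp

lemma stP_cont {c : ℂ} (hc : 0 < c.re) {Y : ℝ} (hY : 0 < Y) : Continuous (stP c Y) := by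
  have h1 : Integrable (fun ξ : ℝ => cfS c Y (2 * π * ξ)) :=
    (cfS_integrable hc hY).comp_mul_left' (by positivity)
  have h2 : Continuous (FourierTransform.fourier (fun ξ : ℝ => cfS c Y (2 * π * ξ))) :=
    VectorFourier.fourierIntegral_continuous Real.continuous_fourierChar (by fun_prop) h1
  have : stP c Y = fun x => (FourierTransform.fourier (fun ξ : ℝ => cfS c Y (2 * π * ξ)) x).re := by
    funext x; rw [fourier_cfS hc hY]; simp
  rw [this]
  exact Complex.continuous_re.comp h2

lemma stP_bdd {c : ℂ} (hc : 0 < c.re) {Y : ℝ} (hY : 0 < Y) :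
    ∃ M : ℝ, 0 ≤ M ∧ ∀ x, |stP c Y x| ≤ M := by
  refine ⟨(1 / π) * ∫ r in Ioi (0:ℝ), ‖cfS c Y r‖, by positivity, fun x => ?_⟩
  unfold stP
  rw [abs_mul, abs_of_pos (by positivity : 0 < 1 / π)]
  gcongr
  refine (Complex.abs_re_le_norm _).trans ((norm_integral_le_integral_norm _).trans (le_of_eq ?_))
  refine setIntegral_congr_fun measurableSet_Ioi fun u hu => ?_
  rw [cfS_pos c hY hu, Complex.norm_exp, Complex.norm_exp]
  simp

/-- Tail constant. -/
def stT (c : ℂ) (Y : ℝ) : ℝ :=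
  (1 / π) * (-(c * (Real.Gamma (1 + Y) : ℂ) * Complex.exp (-(Complex.I * (π / 2) * (1 + Y))))).re

lemma stP_tail_pos {c : ℂ} (hc : 0 < c.re) {Y : ℝ} (hY : 1 < Y) :
    ∃ C : ℝ, 0 ≤ C ∧ ∀ x, 0 < x → |stP c Y x - stT c Y * x ^ (-1 - Y)| ≤ C * x ^ (-1 - 2 * Y) := by
  obtain ⟨C, hC, h⟩ := K_expand hc hY
  refine ⟨(1 / π) * C, by positivity, fun x hx => ?_⟩
  have e : (stP c Y x - stT c Y * x ^ (-1 - Y)) = (1 / π) * ((∫ r in Ioi (0:ℝ), Complex.exp (-(Complex.I * x * r + c * ((r ^ Y : ℝ) : ℂ))))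
        - (-Complex.I * ((1 / x : ℝ) : ℂ) - c * (((1 / x) ^ (1 + Y) * Real.Gamma (1 + Y) : ℝ) : ℂ) *
            Complex.exp (-(Complex.I * (π / 2) * (1 + Y))))).re := by
    unfold stP stT
    have hx' : (1 / x) ^ (1 + Y) = x ^ (-1 - Y) := by
      rw [one_div, Real.inv_rpow hx.le, ← Real.rpow_neg hx.le]; ring_nf
    rw [hx', Complex.sub_re, Complex.sub_re]
    have e1 : (-Complex.I * ((1 / x : ℝ) : ℂ)).re = 0 := by
      rw [Complex.re_mul_ofReal]; simp
    have e2 : (c * ((x ^ (-1 - Y) * Real.Gamma (1 + Y) : ℝ) : ℂ) *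
            Complex.exp (-(Complex.I * (π / 2) * (1 + Y)))) =
        ((x ^ (-1 - Y) : ℝ) : ℂ) * (c * (Real.Gamma (1 + Y) : ℂ) * Complex.exp (-(Complex.I * (π / 2) * (1 + Y)))) := by
      push_cast; ring
    rw [e1, e2, Complex.re_ofReal_mul, Complex.neg_re]
    ring
  rw [e, abs_mul, abs_of_pos (by positivity : 0 < 1 / π), mul_assoc (1 / π) C]
  exact mul_le_mul_of_nonneg_left ((Complex.abs_re_le_norm _).trans (h x hx)) (by positivity)

/-- the weight -/
def wt (a b x : ℝ) : ℝ := if 0 < x then a else b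

lemma stP_tail {c : ℂ} (hc : 0 < c.re) {Y : ℝ} (hY : 1 < Y) :
    ∃ C : ℝ, 0 ≤ C ∧ ∀ x, x ≠ 0 →
      |stP c Y x - wt (stT c Y) (stT (conj c) Y) x * |x| ^ (-1 - Y)| ≤ C * |x| ^ (-1 - 2 * Y) := by
  obtain ⟨C₁, hC₁, h₁⟩ := stP_tail_pos hc hY
  obtain ⟨C₂, hC₂, h₂⟩ := stP_tail_pos (c := conj c) (by simpa using hc) hY
  refine ⟨max C₁ C₂, le_max_of_le_left hC₁, fun x hx => ?_⟩
  rcases lt_or_gt_of_ne hx with hx | hx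
  · have := h₂ (-x) (by linarith)
    rw [← stP_neg, neg_neg] at this
    rw [wt, if_neg (by linarith), abs_of_neg hx]
    refine this.trans ?_
    have : 0 ≤ (-x) ^ (-1 - 2 * Y) := Real.rpow_nonneg (by linarith) _
    gcongr
    exact le_max_right _ _
  · rw [wt, if_pos hx, abs_of_pos hx]
    refine (h₁ x hx).trans ?_
    gcongr
    exact le_max_left _ _



lemma stP_decay {c : ℂ} (hc : 0 < c.re) {Y : ℝ} (hY : 1 < Y) :
    ∃ K : ℝ, 0 ≤ K ∧ ∀ x, x ≠ 0 → |stP c Y x| ≤ K * |x| ^ (-1 - Y) := by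
  obtain ⟨C, hC, h⟩ := stP_tail hc hY
  obtain ⟨M, hM, hb⟩ := stP_bdd hc (by linarith : 0 < Y)
  set A := |stT c Y| + |stT (conj c) Y| with hA
  have hA0 : 0 ≤ A := by positivity
  have hw : ∀ x, |wt (stT c Y) (stT (conj c) Y) x| ≤ A := by
    intro x; unfold wt; split_ifs <;> rw [hA]
    · linarith [abs_nonneg (stT (conj c) Y)]
    · linarith [abs_nonneg (stT c Y)]
  refine ⟨M + C + A, by positivity, fun x hx => ?_⟩
  have hx' : 0 < |x| := abs_pos.2 hx
  have hp : 0 ≤ |x| ^ (-1 - Y) := by positivity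
  rcases le_total |x| 1 with h1 | h1
  · have : 1 ≤ |x| ^ (-1 - Y) := Real.one_le_rpow_of_pos_of_le_one_of_nonpos hx' h1 (by linarith)
    calc |stP c Y x| ≤ M := hb x
      _ ≤ M * |x| ^ (-1 - Y) := by nlinarith
      _ ≤ _ := by gcongr; linarith
  · have h2 := h x hx
    have h3 : |x| ^ (-1 - 2 * Y) ≤ |x| ^ (-1 - Y) :=
      Real.rpow_le_rpow_of_exponent_le h1 (by linarith)
    have h4 : |wt (stT c Y) (stT (conj c) Y) x * |x| ^ (-1 - Y)| ≤ A * |x| ^ (-1 - Y) := by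
      rw [abs_mul, abs_of_nonneg hp]; gcongr; exact hw x
    have h5 := abs_sub_abs_le_abs_sub (stP c Y x) (wt (stT c Y) (stT (conj c) Y) x * |x| ^ (-1 - Y))
    have h6 : C * |x| ^ (-1 - 2 * Y) ≤ C * |x| ^ (-1 - Y) := by gcongr
    nlinarith

lemma stP_integrable {c : ℂ} (hc : 0 < c.re) {Y : ℝ} (hY : 1 < Y) : Integrable (stP c Y) := by
  obtain ⟨M, hM, hb⟩ := stP_bdd hc (by linarith : 0 < Y)
  have key : ∀ c : ℂ, 0 < c.re → IntegrableOn (stP c Y) (Ioi 0) := by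
    intro c hc
    obtain ⟨M, hM, hb⟩ := stP_bdd hc (by linarith : 0 < Y)
    obtain ⟨K, hK, h⟩ := stP_decay hc hY
    have hcont := stP_cont hc (by linarith : 0 < Y)
    rw [← Ioc_union_Ioi_eq_Ioi (zero_le_one (α := ℝ))]
    refine IntegrableOn.union ?_ ?_
    · exact (hcont.integrableOn_Icc (a := 0) (b := 1)).mono_set Ioc_subset_Icc_self
    · have := (integrableOn_Ioi_rpow_of_lt (by linarith : -1 - Y < -1) one_pos).const_mul K
      refine this.mono' hcont.aestronglyMeasurable ?_
      filter_upwards [ae_restrict_mem measurableSet_Ioi] with x hx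
      have hx0 : 0 < x := lt_trans one_pos hx
      have := h x hx0.ne'
      rwa [abs_of_pos hx0] at this
  refine integrable_of_halves (key c hc) ?_
  simp_rw [stP_neg]
  exact key _ (by simpa using hc)

lemma stP_charFun {c : ℂ} (hc : 0 < c.re) {Y : ℝ} (hY : 1 < Y) (u : ℝ) :
    ∫ x : ℝ, Complex.exp (u * x * Complex.I) * (stP c Y x : ℂ) = cfS c Y u := by
  have hY0 : 0 < Y := by linarith
  have hpi := Real.pi_pos
  have h1 : Integrable (fun ξ : ℝ => cfS c Y (2 * π * ξ)) :=
    (cfS_integrable hc hY0).comp_mul_left' (by positivity)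
  have hF : FourierTransform.fourier (fun ξ : ℝ => cfS c Y (2 * π * ξ)) = fun x => (stP c Y x : ℂ) := by
    funext x; exact fourier_cfS hc hY0 x
  have h2 : Integrable (FourierTransform.fourier (fun ξ : ℝ => cfS c Y (2 * π * ξ))) := by
    rw [hF]; exact (stP_integrable hc hY).ofReal
  have hcont : Continuous (fun ξ : ℝ => cfS c Y (2 * π * ξ)) := (cfS_cont c hY0).comp (by fun_prop)
  have h3 := Continuous.fourierInv_fourier_eq hcont h1 h2
  have h4 := congrFun h3 (u / (2 * π))
  rw [hF, Real.fourierInv_eq'] at h4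
  have e : 2 * π * (u / (2 * π)) = u := by field_simp
  simp only [e] at h4
  rw [← h4]
  refine integral_congr_ae (Eventually.of_forall fun x => ?_)
  simp only [smul_eq_mul]
  congr 2
  have : 2 * π * inner ℝ x (u / (2 * π)) = u * x := by
    simp; field_simp
  rw [this]; push_cast; ring

lemma density_of_cf {c : ℂ} (hc : 0 < c.re) {Y : ℝ} (hY : 1 < Y) (μ : Measure ℝ) [IsFiniteMeasure μ]
    (hμ : ∀ u : ℝ, charFun μ u = cfS c Y u) (f : ℝ → ℝ) (hf : Measurable f) (B : ℝ)
    (hB : ∀ x, |f x| ≤ B) : ∫ x, f x ∂μ = ∫ x, f x * stP c Y x := by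
  have hcont := stP_cont hc (by linarith : 0 < Y)
  have hintg := stP_integrable hc hY
  have hm : Measurable (stP c Y) := hcont.measurable
  set np : ℝ → ℝ≥0 := fun x => Real.toNNReal (stP c Y x) with hnp
  set nm : ℝ → ℝ≥0 := fun x => Real.toNNReal (-stP c Y x) with hnm
  have mnp : Measurable np := hm.real_toNNReal
  have mnm : Measurable nm := hm.neg.real_toNNReal
  set νp := (volume : Measure ℝ).withDensity (fun x => (np x : ℝ≥0∞)) with hνp
  set νm := (volume : Measure ℝ).withDensity (fun x => (nm x : ℝ≥0∞)) with hνm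
  haveI : IsFiniteMeasure νp := isFiniteMeasure_withDensity_ofReal hintg.2
  haveI : IsFiniteMeasure νm := isFiniteMeasure_withDensity_ofReal hintg.neg.2
  have ip : ∀ {E : Type} [NormedAddCommGroup E] [NormedSpace ℝ E] (g : ℝ → E),
      ∫ x, g x ∂νp = ∫ x, (np x) • g x := fun g => integral_withDensity_eq_integral_smul mnp g
  have im : ∀ {E : Type} [NormedAddCommGroup E] [NormedSpace ℝ E] (g : ℝ → E),
      ∫ x, g x ∂νm = ∫ x, (nm x) • g x := fun g => integral_withDensity_eq_integral_smul mnm g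
  have diff : ∀ x, (np x : ℝ) - nm x = stP c Y x := by
    intro x
    simp only [hnp, hnm, Real.coe_toNNReal']
    rcases le_total (stP c Y x) 0 with h | h
    · rw [max_eq_right h, max_eq_left (by linarith)]; ring
    · rw [max_eq_left h, max_eq_right (by linarith)]; ring
  have npi : Integrable (fun x => (np x : ℝ)) := by
    simp only [hnp, Real.coe_toNNReal']; exact hintg.pos_part
  have nmi : Integrable (fun x => (nm x : ℝ)) := by
    simp only [hnm, Real.coe_toNNReal']; exact hintg.neg.pos_part
  have heq : μ + νm = νp := by
    apply Measure.ext_of_charFun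
    funext u
    rw [charFun_apply_real, charFun_apply_real]
    have hbi : ∀ (ν : Measure ℝ) [IsFiniteMeasure ν],
        Integrable (fun x : ℝ => Complex.exp (u * x * Complex.I)) ν := by
      intro ν _
      refine Integrable.of_bound (C := 1) (Continuous.aestronglyMeasurable (by fun_prop)) ?_
      refine Eventually.of_forall fun x => ?_
      rw [← Complex.ofReal_mul, Complex.norm_exp_ofReal_mul_I]
    rw [integral_add_measure (hbi _) (hbi _), ← charFun_apply_real, hμ, ip, im, ← stP_charFun hc hY]
    have hsm : ∀ (n : ℝ → ℝ≥0), Measurable n → Integrable (fun x => (n x : ℝ)) →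
        Integrable (fun x => n x • Complex.exp (u * x * Complex.I)) := by
      intro n mn hn
      refine hn.mono' ?_ (Eventually.of_forall fun x => ?_)
      · exact mn.aestronglyMeasurable.smul (Continuous.aestronglyMeasurable (by fun_prop))
      · rw [NNReal.smul_def, norm_smul, ← Complex.ofReal_mul, Complex.norm_exp_ofReal_mul_I]; simp
    have e : ∀ x : ℝ, Complex.exp (u * x * Complex.I) * (stP c Y x : ℂ) =
        np x • Complex.exp (u * x * Complex.I) - nm x • Complex.exp (u * x * Complex.I) := by
      intro x
      rw [← diff x, NNReal.smul_def, NNReal.smul_def, Complex.real_smul, Complex.real_smul]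
      push_cast; ring
    simp_rw [e]
    rw [integral_sub (hsm np mnp npi) (hsm nm mnm nmi)]
    ring
  have hbi : ∀ (ν : Measure ℝ) [IsFiniteMeasure ν], Integrable f ν := by
    intro ν _
    exact Integrable.of_bound (C := B) hf.aestronglyMeasurable (Eventually.of_forall hB)
  have h1 : ∫ x, f x ∂μ + ∫ x, f x ∂νm = ∫ x, f x ∂νp := by
    rw [← integral_add_measure (hbi _) (hbi _), heq]
  rw [ip, im] at h1
  have hsm : ∀ (n : ℝ → ℝ≥0), Measurable n → Integrable (fun x => (n x : ℝ)) →
        Integrable (fun x => n x • f x) := by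
    intro n mn hn
    refine (hn.mul_const B).mono' ?_ (Eventually.of_forall fun x => ?_)
    · exact mn.aestronglyMeasurable.smul hf.aestronglyMeasurable
    · rw [NNReal.smul_def, norm_smul]
      simp only [Real.norm_eq_abs, NNReal.abs_eq]
      exact mul_le_mul_of_nonneg_left (hB x) (by positivity)
  have e : ∀ x : ℝ, f x * stP c Y x = np x • f x - nm x • f x := by
    intro x
    rw [← diff x, NNReal.smul_def, NNReal.smul_def, smul_eq_mul, smul_eq_mul]
    ring
  simp_rw [e]
  rw [integral_sub (hsm np mnp npi) (hsm nm mnm nmi)]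
  linarith



/-- complex parameter of the stable law -/
def stC (Y Cp Cm : ℝ) : ℂ :=
  ((varsigma Y Cp Cm ^ Y : ℝ) : ℂ) *
    (1 - Complex.I * (((Cp - Cm) / (Cp + Cm) * Real.tan (π * Y / 2) : ℝ) : ℂ))

lemma gamma_neg_pos {Y : ℝ} (hY1 : 1 < Y) (hY2 : Y < 2) : 0 < Real.Gamma (-Y) := by
  have h1 : Real.Gamma (2 - Y) = (1 - Y) * Real.Gamma (1 - Y) := by
    rw [← Real.Gamma_add_one (by linarith)]; congr 1; ring
  have h2 : Real.Gamma (1 - Y) = (-Y) * Real.Gamma (-Y) := by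
    rw [← Real.Gamma_add_one (by linarith)]; congr 1; ring
  have h3 : 0 < Real.Gamma (2 - Y) := Real.Gamma_pos_of_pos (by linarith)
  rw [h1, h2, ← mul_assoc] at h3
  exact (pos_iff_pos_of_mul_pos h3).1 (by nlinarith)

lemma cos_half_neg {Y : ℝ} (hY1 : 1 < Y) (hY2 : Y < 2) : Real.cos (π * Y / 2) < 0 := by
  have := Real.pi_pos
  apply Real.cos_neg_of_pi_div_two_lt_of_lt <;> nlinarith

lemma sin_half_pos {Y : ℝ} (hY1 : 1 < Y) (hY2 : Y < 2) : 0 < Real.sin (π * Y / 2) := by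
  have := Real.pi_pos
  apply Real.sin_pos_of_pos_of_lt_pi <;> nlinarith

lemma varsigma_pow {Y Cp Cm : ℝ} (hY1 : 1 < Y) (hY2 : Y < 2) (hCp : 0 < Cp) (hCm : 0 < Cm) :
    varsigma Y Cp Cm ^ Y = (Cp + Cm) * Real.Gamma (-Y) * (- Real.cos (π * Y / 2)) := by
  unfold varsigma
  have := gamma_neg_pos hY1 hY2
  rw [← Real.rpow_mul (by positivity), one_div, inv_mul_cancel₀ (by linarith), Real.rpow_one,
    abs_of_neg (cos_half_neg hY1 hY2)]

lemma varsigma_pow_pos {Y Cp Cm : ℝ} (hY1 : 1 < Y) (hY2 : Y < 2) (hCp : 0 < Cp) (hCm : 0 < Cm) :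
    0 < varsigma Y Cp Cm ^ Y := by
  rw [varsigma_pow hY1 hY2 hCp hCm]
  have := gamma_neg_pos hY1 hY2
  have := cos_half_neg hY1 hY2
  have : 0 < - Real.cos (π * Y / 2) := by linarith
  positivity

lemma stC_re {Y Cp Cm : ℝ} (hY1 : 1 < Y) (hY2 : Y < 2) (hCp : 0 < Cp) (hCm : 0 < Cm) :
    0 < (stC Y Cp Cm).re := by
  unfold stC
  rw [Complex.re_ofReal_mul]
  have := varsigma_pow_pos hY1 hY2 hCp hCm
  have h : (1 - Complex.I * (((Cp - Cm) / (Cp + Cm) * Real.tan (π * Y / 2) : ℝ) : ℂ)).re = 1 := by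
    rw [Complex.sub_re, Complex.re_mul_ofReal]; simp
  rw [h]; linarith

lemma stC_conj {Y Cp Cm : ℝ} : conj (stC Y Cp Cm) = stC Y Cm Cp := by
  unfold stC
  have h : varsigma Y Cm Cp = varsigma Y Cp Cm := by unfold varsigma; rw [add_comm Cm]
  rw [h, map_mul, map_sub, map_mul, Complex.conj_ofReal, Complex.conj_ofReal, map_one, Complex.conj_I]
  have : (Cm - Cp) / (Cm + Cp) = - ((Cp - Cm) / (Cp + Cm)) := by rw [add_comm Cm]; ring
  rw [this]
  push_cast; ring

lemma stT_stC {Y Cp Cm : ℝ} (hY1 : 1 < Y) (hY2 : Y < 2) (hCp : 0 < Cp) (hCm : 0 < Cm) :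
    stT (stC Y Cp Cm) Y = Cp := by
  unfold stT stC
  have hs := sin_half_pos hY1 hY2
  have hcn := cos_half_neg hY1 hY2
  set a := π * Y / 2 with ha
  have hE : Complex.exp (-(Complex.I * (π / 2) * (1 + Y))) = ((-Real.sin a : ℝ) : ℂ) - ((Real.cos a : ℝ) : ℂ) * Complex.I := by
    have : -(Complex.I * (π / 2) * (1 + Y)) = ((-(a + π / 2) : ℝ) : ℂ) * Complex.I := by
      rw [ha]; push_cast; ring
    rw [this, Complex.exp_mul_I, ← Complex.ofReal_cos, ← Complex.ofReal_sin, Real.cos_neg, Real.sin_neg,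
      Real.cos_add_pi_div_two, Real.sin_add_pi_div_two]
    push_cast; ring
  rw [hE, varsigma_pow hY1 hY2 hCp hCm, ← ha]
  have hG : Real.Gamma (-Y) * Real.Gamma (1 + Y) = - π / (2 * Real.sin a * Real.cos a) := by
    have := Real.Gamma_mul_Gamma_one_sub (-Y)
    rw [sub_neg_eq_add] at this
    rw [this, ← Real.sin_two_mul]
    have : π * -Y = - (2 * a) := by rw [ha]; ring
    rw [this, Real.sin_neg]; rw [div_neg, neg_div]
  have ht : Real.tan a * Real.cos a = Real.sin a := Real.tan_mul_cos hcn.ne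
  set b := (Cp - Cm) / (Cp + Cm) with hb
  have hre : (-( (((Cp + Cm) * Real.Gamma (-Y) * (-Real.cos a) : ℝ) : ℂ) * (1 - Complex.I * ((b * Real.tan a : ℝ) : ℂ)) *
      (Real.Gamma (1 + Y) : ℂ) * (((-Real.sin a : ℝ) : ℂ) - ((Real.cos a : ℝ) : ℂ) * Complex.I))).re =
      (Cp + Cm) * (Real.Gamma (-Y) * Real.Gamma (1 + Y)) * (- Real.cos a) * (Real.sin a + b * (Real.tan a * Real.cos a)) := by
    have : (-( (((Cp + Cm) * Real.Gamma (-Y) * (-Real.cos a) : ℝ) : ℂ) * (1 - Complex.I * ((b * Real.tan a : ℝ) : ℂ)) *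
      (Real.Gamma (1 + Y) : ℂ) * (((-Real.sin a : ℝ) : ℂ) - ((Real.cos a : ℝ) : ℂ) * Complex.I))) = 
      (((Cp + Cm) * (Real.Gamma (-Y) * Real.Gamma (1 + Y)) * (- Real.cos a) * (Real.sin a + b * (Real.tan a * Real.cos a)) : ℝ) : ℂ)
       + (((Cp + Cm) * (Real.Gamma (-Y) * Real.Gamma (1 + Y)) * (- Real.cos a) * (Real.cos a - b * Real.tan a * Real.sin a) : ℝ) : ℂ) * Complex.I := by
      push_cast
      linear_combination (((Cp:ℂ) + Cm) * Real.Gamma (-Y) * Real.Gamma (1 + Y) * (Complex.cos a) * b * Complex.tan a * Complex.cos a) * Complex.I_sq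
    rw [this]
    simp only [Complex.add_re, Complex.ofReal_re, Complex.re_ofReal_mul, Complex.I_re, mul_zero, add_zero]
  rw [hre, hG, ht]
  have hpi := Real.pi_pos
  have hc0 := hcn.ne
  have : Cp + Cm ≠ 0 := by positivity
  rw [hb]
  field_simp
  ring

lemma stableCF_eq {Y Cp Cm : ℝ} (hY1 : 1 < Y) (u : ℝ) :
    stableCF Y Cp Cm u = cfS (stC Y Cp Cm) Y u := by
  have hY0 : Y ≠ 0 := by linarith
  unfold stableCF cfS
  rw [stC_conj]
  have h : varsigma Y Cm Cp = varsigma Y Cp Cm := by unfold varsigma; rw [add_comm Cm]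
  unfold stablePart stC
  rw [h]
  have h2 : (Cm - Cp) / (Cm + Cp) = - ((Cp - Cm) / (Cp + Cm)) := by rw [add_comm Cm]; ring
  rw [h2]
  congr 2
  rcases lt_trichotomy u 0 with hu | hu | hu
  · rw [Real.sign_of_neg hu, abs_of_neg hu, max_eq_right hu.le, max_eq_left (by linarith), Real.zero_rpow hY0]
    push_cast; ring
  · subst hu
    simp [Real.zero_rpow hY0]
  · rw [Real.sign_of_pos hu, abs_of_pos hu, max_eq_left hu.le, max_eq_right (by linarith), Real.zero_rpow hY0]
    push_cast; ring



lemma one_sub_cos_le (t : ℝ) : |1 - Real.cos t| ≤ t ^ 2 / 2 := by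
  rw [abs_of_nonneg (by linarith [Real.cos_le_one t])]
  linarith [Real.one_sub_sq_div_two_le_cos (x := t)]

lemma sq_err_aux {e : ℝ → ℝ} {Y κ C u0 : ℝ} (hY1 : 1 < Y) (hY2 : Y < 2) (hu0 : 0 < u0)
    (he : Measurable e) (hr : Integrable (fun y => y ^ 2 * e y))
    (hF : ∀ u, 0 < u → u ≤ u0 → |(∫ x, (1 - Real.cos (u * x)) * e x) - κ * u ^ Y| ≤ C * u ^ (2 * Y)) :
    ∫ y, y ^ 2 * e y = 0 := by
  set F : ℝ → ℝ := fun u => ∫ x, (1 - Real.cos (u * x)) * e x with hFd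
  set B := ∫ y, |y ^ 2 * e y| with hB
  have hbd : ∀ u, |F u| ≤ u ^ 2 / 2 * B := by
    intro u
    rw [hFd, hB, ← integral_const_mul]
    refine (norm_integral_le_integral_norm (fun x => (1 - Real.cos (u * x)) * e x)).trans ?_
    refine integral_mono_of_nonneg (Eventually.of_forall fun x => norm_nonneg _) (hr.norm.const_mul _) ?_
    refine Eventually.of_forall fun x => ?_
    simp only [Real.norm_eq_abs, abs_mul]
    have := one_sub_cos_le (u * x)
    rw [abs_of_nonneg (sq_nonneg x)]
    calc _ ≤ (u * x) ^ 2 / 2 * |e x| := by gcongr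
      _ = _ := by ring
  have hev : ∀ᶠ u in 𝓝[>] (0:ℝ), 0 < u ∧ u ≤ u0 := by
    filter_upwards [Ioc_mem_nhdsGT hu0] with u hu using hu
  have tp : ∀ q : ℝ, 0 < q → Tendsto (fun u : ℝ => u ^ q) (𝓝[>] 0) (𝓝 0) := by
    intro q hq
    have := (Real.continuous_rpow_const hq.le).tendsto 0
    rw [Real.zero_rpow hq.ne'] at this
    exact this.mono_left nhdsWithin_le_nhds
  have hκ : κ = 0 := by
    have h1 : |κ| ≤ 0 := by
      have ht : Tendsto (fun u : ℝ => B / 2 * u ^ (2 - Y) + C * u ^ Y) (𝓝[>] 0) (𝓝 (B / 2 * 0 + C * 0)) :=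
        ((tp _ (by linarith)).const_mul _).add ((tp _ (by linarith)).const_mul _)
      rw [mul_zero, mul_zero, add_zero] at ht
      refine ge_of_tendsto ht ?_
      filter_upwards [hev] with u hu
      have hup : 0 < u ^ Y := Real.rpow_pos_of_pos hu.1 _
      have e1 : u ^ 2 = u ^ (2 - Y) * u ^ Y := by
        rw [← Real.rpow_add hu.1, ← Real.rpow_natCast]; congr 1; push_cast; ring
      have e2 : u ^ (2 * Y) = u ^ Y * u ^ Y := by
        rw [← Real.rpow_add hu.1]; congr 1; ring
      have h2 := hF u hu.1 hu.2
      have h3 := hbd u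
      rw [e1] at h3
      rw [e2] at h2
      have h4 : |κ * u ^ Y| ≤ (u ^ (2 - Y) * u ^ Y) / 2 * B + C * (u ^ Y * u ^ Y) := by
        have : κ * u ^ Y = F u - (F u - κ * u ^ Y) := by ring
        rw [this]
        exact (abs_sub _ _).trans (add_le_add h3 h2)
      rw [abs_mul, abs_of_pos hup] at h4
      have : |κ| * u ^ Y ≤ (B / 2 * u ^ (2 - Y) + C * u ^ Y) * u ^ Y := by linarith
      exact le_of_mul_le_mul_right this hup
    exact abs_eq_zero.1 (le_antisymm h1 (abs_nonneg _))
  have l1 : Tendsto (fun u => F u / u ^ 2) (𝓝[>] 0) (𝓝 0) := by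
    have ht : Tendsto (fun u : ℝ => C * u ^ (2 * Y - 2)) (𝓝[>] 0) (𝓝 (C * 0)) :=
      (tp _ (by linarith)).const_mul _
    rw [mul_zero] at ht
    refine squeeze_zero_norm' ?_ ht
    filter_upwards [hev] with u hu
    have h2 := hF u hu.1 hu.2
    rw [hκ, zero_mul, sub_zero] at h2
    have e1 : u ^ (2 * Y) = u ^ (2 * Y - 2) * u ^ 2 := by
      rw [← Real.rpow_natCast, ← Real.rpow_add hu.1]; congr 1; push_cast; ring
    have hu2 : 0 < u ^ 2 := by have := hu.1; positivity
    rw [norm_div, Real.norm_eq_abs, Real.norm_eq_abs, abs_of_pos hu2, div_le_iff₀ hu2]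
    rw [e1] at h2; linarith
  have l2 : Tendsto (fun u => F u / u ^ 2) (𝓝[>] 0) (𝓝 (∫ y, 1 / 2 * (y ^ 2 * e y))) := by
    have e0 : ∀ u, F u / u ^ 2 = ∫ x, (1 - Real.cos (u * x)) * e x / u ^ 2 := by
      intro u; rw [integral_div]
    simp_rw [e0]
    refine tendsto_integral_filter_of_dominated_convergence (fun y => |y ^ 2 * e y|) ?_ ?_ hr.norm ?_
    · refine Eventually.of_forall fun u => Measurable.aestronglyMeasurable ?_
      fun_prop
    · filter_upwards [hev] with u hu
      refine Eventually.of_forall fun x => ?_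
      have hu2 : 0 < u ^ 2 := by have := hu.1; positivity
      have := one_sub_cos_le (u * x)
      rw [norm_div, norm_mul, Real.norm_eq_abs, Real.norm_eq_abs, Real.norm_eq_abs, abs_of_pos hu2, div_le_iff₀ hu2,
        abs_mul, abs_of_nonneg (sq_nonneg x)]
      calc _ ≤ (u * x) ^ 2 / 2 * |e x| := by gcongr
        _ ≤ (u * x) ^ 2 * |e x| := by gcongr; nlinarith [sq_nonneg (u * x)]
        _ = _ := by ring
    · refine Eventually.of_forall fun x => ?_
      rw [tendsto_iff_norm_sub_tendsto_zero]
      have ht : Tendsto (fun u : ℝ => |x| ^ 4 * |e x| * u ^ (2:ℝ)) (𝓝[>] 0) (𝓝 (|x| ^ 4 * |e x| * 0)) :=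
        (tp _ (by norm_num)).const_mul _
      rw [mul_zero] at ht
      refine squeeze_zero' (Eventually.of_forall fun u => norm_nonneg _) ?_ ht
      have hx1 : ∀ᶠ u in 𝓝[>] (0:ℝ), u ≤ 1 / (1 + |x|) := by
        filter_upwards [Ioc_mem_nhdsGT (show (0:ℝ) < 1 / (1 + |x|) by positivity)] with u hu using hu.2
      filter_upwards [hev, hx1] with u hu hu1
      have hup := hu.1
      have hux : |u * x| ≤ 1 := by
        rw [abs_mul, abs_of_pos hu.1]
        rw [le_div_iff₀ (by positivity)] at hu1
        nlinarith [abs_nonneg x]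
      have hc := Real.cos_bound hux
      have : (1 - Real.cos (u * x)) * e x / u ^ 2 - 1 / 2 * (x ^ 2 * e x) =
          - ((Real.cos (u * x) - (1 - (u * x) ^ 2 / 2)) * e x) / u ^ 2 := by
        field_simp; ring
      rw [this, norm_div, norm_neg, norm_mul, Real.norm_eq_abs, Real.norm_eq_abs, Real.norm_eq_abs, abs_of_pos (by positivity : 0 < u ^ 2),
        div_le_iff₀ (by positivity)]
      calc _ ≤ |u * x| ^ 4 * (5 / 96) * |e x| := by gcongr
        _ ≤ |u * x| ^ 4 * 1 * |e x| := by gcongr; norm_num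
        _ = _ := by
          rw [abs_mul, abs_of_pos hup, Real.rpow_two]; ring
  have := tendsto_nhds_unique l1 l2
  rw [integral_const_mul] at this
  linarith

/-- tail error -/
def stE (Y Cp Cm x : ℝ) : ℝ := stP (stC Y Cp Cm) Y x - wt Cp Cm x * |x| ^ (-1 - Y)

lemma wt_meas (a b : ℝ) : Measurable (wt a b) := by
  unfold wt
  exact Measurable.ite measurableSet_Ioi measurable_const measurable_const

lemma wt_abs {a b : ℝ} (ha : 0 < a) (hb : 0 < b) (x : ℝ) : |wt a b x| ≤ a + b := by
  unfold wt; split_ifs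
  · rw [abs_of_pos ha]; linarith
  · rw [abs_of_pos hb]; linarith

lemma stE_meas {Y Cp Cm : ℝ} (hY1 : 1 < Y) (hY2 : Y < 2) (hCp : 0 < Cp) (hCm : 0 < Cm) :
    Measurable (stE Y Cp Cm) := by
  have := (stP_cont (stC_re hY1 hY2 hCp hCm) (by linarith : 0 < Y)).measurable
  have := wt_meas Cp Cm
  unfold stE
  fun_prop

lemma stE_bound {Y Cp Cm : ℝ} (hY1 : 1 < Y) (hY2 : Y < 2) (hCp : 0 < Cp) (hCm : 0 < Cm) :
    ∃ K : ℝ, 0 ≤ K ∧ ∀ x, x ≠ 0 → |stE Y Cp Cm x| ≤ K * |x| ^ (-1 - 2 * Y) ∧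
      |stE Y Cp Cm x| ≤ K * |x| ^ (-1 - Y) := by
  have hc := stC_re hY1 hY2 hCp hCm
  obtain ⟨C, hC, h⟩ := stP_tail hc hY1
  rw [stC_conj, stT_stC hY1 hY2 hCp hCm, stT_stC hY1 hY2 hCm hCp] at h
  obtain ⟨D, hD, h'⟩ := stP_decay hc hY1
  refine ⟨C + (D + (Cp + Cm)), by positivity, fun x hx => ⟨?_, ?_⟩⟩
  · refine (h x hx).trans ?_
    gcongr; linarith
  · unfold stE
    have h1 := abs_sub (stP (stC Y Cp Cm) Y x) (wt Cp Cm x * |x| ^ (-1 - Y))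
    have hp : 0 ≤ |x| ^ (-1 - Y) := by positivity
    have h4 : |wt Cp Cm x * |x| ^ (-1 - Y)| ≤ (Cp + Cm) * |x| ^ (-1 - Y) := by
      rw [abs_mul, abs_of_nonneg hp]; gcongr; exact wt_abs hCp hCm x
    have := h' x hx
    nlinarith [mul_nonneg hC hp]



lemma integrable_of_powers {f : ℝ → ℝ} (hf : Measurable f) {K a b : ℝ} (ha : -1 < a) (hb : b < -1)
    (h : ∀ x, x ≠ 0 → |f x| ≤ K * |x| ^ a) (h' : ∀ x, x ≠ 0 → |f x| ≤ K * |x| ^ b) : Integrable f := by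
  have key : ∀ g : ℝ → ℝ, Measurable g → (∀ x, 0 < x → |g x| ≤ K * x ^ a) →
      (∀ x, 0 < x → |g x| ≤ K * x ^ b) → IntegrableOn g (Ioi 0) := by
    intro g hg h1 h2
    rw [← Ioc_union_Ioi_eq_Ioi (zero_le_one (α := ℝ))]
    refine IntegrableOn.union ?_ ?_
    · have := (intervalIntegral.intervalIntegrable_rpow' (a := 0) (b := 1) ha).1.const_mul K
      refine Integrable.mono' this hg.aestronglyMeasurable ?_
      filter_upwards [ae_restrict_mem measurableSet_Ioc] with x hx using h1 x hx.1
    · have := (integrableOn_Ioi_rpow_of_lt hb one_pos).const_mul K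
      refine this.mono' hg.aestronglyMeasurable ?_
      filter_upwards [ae_restrict_mem measurableSet_Ioi] with x hx using h2 x (lt_trans one_pos hx)
  refine integrable_of_halves (key f hf ?_ ?_) (key _ (hf.comp measurable_neg) ?_ ?_)
  · intro x hx; have := h x hx.ne'; rwa [abs_of_pos hx] at this
  · intro x hx; have := h' x hx.ne'; rwa [abs_of_pos hx] at this
  · intro x hx; have := h (-x) (by linarith); rwa [abs_neg, abs_of_pos hx] at this
  · intro x hx; have := h' (-x) (by linarith); rwa [abs_neg, abs_of_pos hx] at this

lemma abs_pow_mul_rpow {x : ℝ} (hx : x ≠ 0) (n : ℕ) (q : ℝ) : |x| ^ n * |x| ^ q = |x| ^ (n + q) := by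
  rw [Real.rpow_add (abs_pos.2 hx), Real.rpow_natCast]

lemma stE_sq_integrable {Y Cp Cm : ℝ} (hY1 : 1 < Y) (hY2 : Y < 2) (hCp : 0 < Cp) (hCm : 0 < Cm) :
    Integrable (fun y => y ^ 2 * stE Y Cp Cm y) := by
  obtain ⟨K, hK, h⟩ := stE_bound hY1 hY2 hCp hCm
  have hm := stE_meas hY1 hY2 hCp hCm
  refine integrable_of_powers (K := K) (a := 1 - Y) (b := 1 - 2 * Y) (by fun_prop) (by linarith) (by linarith) ?_ ?_
  · intro x hx
    have e : |x| ^ (1 - Y) = |x| ^ 2 * |x| ^ (-1 - Y) := by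
      rw [abs_pow_mul_rpow hx]; congr 1; push_cast; ring
    rw [abs_mul, abs_pow, e]
    have := (h x hx).2
    calc _ ≤ |x| ^ 2 * (K * |x| ^ (-1 - Y)) := by gcongr
      _ = _ := by ring
  · intro x hx
    have e : |x| ^ (1 - 2 * Y) = |x| ^ 2 * |x| ^ (-1 - 2 * Y) := by
      rw [abs_pow_mul_rpow hx]; congr 1; push_cast; ring
    rw [abs_mul, abs_pow, e]
    have := (h x hx).1
    calc _ ≤ |x| ^ 2 * (K * |x| ^ (-1 - 2 * Y)) := by gcongr
      _ = _ := by ring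

lemma int_one_sub_cos {c : ℂ} (hc : 0 < c.re) {Y : ℝ} (hY : 1 < Y) (u : ℝ) :
    Integrable (fun x => (1 - Real.cos (u * x)) * stP c Y x) ∧
    ∫ x, (1 - Real.cos (u * x)) * stP c Y x = 1 - (cfS c Y u).re := by
  have hi := stP_integrable hc hY
  have hic : Integrable (fun x => Real.cos (u * x) * stP c Y x) := by
    refine hi.norm.mono' (by have := (stP_cont hc (by linarith : 0 < Y)); exact Continuous.aestronglyMeasurable (by fun_prop)) ?_
    refine Eventually.of_forall fun x => ?_
    rw [norm_mul]
    have := Real.abs_cos_le_one (u * x)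
    rw [← Real.norm_eq_abs] at this
    nlinarith [norm_nonneg (stP c Y x)]
  have e : ∀ x, (1 - Real.cos (u * x)) * stP c Y x = stP c Y x - Real.cos (u * x) * stP c Y x := fun x => by ring
  have hre : ∀ v, (cfS c Y v).re = ∫ x, Real.cos (v * x) * stP c Y x := by
    intro v
    rw [← stP_charFun hc hY]
    have hI : Integrable (fun x : ℝ => Complex.exp (v * x * Complex.I) * (stP c Y x : ℂ)) := by
      refine hi.norm.mono' (by have := (stP_cont hc (by linarith : 0 < Y)); exact Continuous.aestronglyMeasurable (by fun_prop)) ?_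
      refine Eventually.of_forall fun x => ?_
      rw [norm_mul, ← Complex.ofReal_mul, Complex.norm_exp_ofReal_mul_I, one_mul, Complex.norm_real]
    have := integral_re (𝕜 := ℂ) hI
    simp only [RCLike.re_to_complex] at this
    rw [← this]
    refine integral_congr_ae (Eventually.of_forall fun x => ?_)
    simp only
    rw [Complex.re_mul_ofReal, ← Complex.ofReal_mul, Complex.exp_ofReal_mul_I_re]
  have h0 : ∫ x, stP c Y x = 1 := by
    have := hre 0
    simp only [zero_mul, Real.cos_zero, one_mul] at this
    rw [← this]
    unfold cfS
    simp [Real.zero_rpow (by linarith : Y ≠ 0)]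
  simp_rw [e]
  refine ⟨hi.sub hic, ?_⟩
  rw [integral_sub hi hic, h0, hre u]

lemma stE_sq_int {Y Cp Cm : ℝ} (hY1 : 1 < Y) (hY2 : Y < 2) (hCp : 0 < Cp) (hCm : 0 < Cm) :
    ∫ y, y ^ 2 * stE Y Cp Cm y = 0 := by
  have hc := stC_re hY1 hY2 hCp hCm
  set c := stC Y Cp Cm with hcd
  have hr := stE_sq_integrable hY1 hY2 hCp hCm
  have hm := stE_meas hY1 hY2 hCp hCm
  set g : ℝ → ℝ := fun x => (1 - Real.cos x) * (wt Cp Cm x * |x| ^ (-1 - Y)) with hg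
  have hscale : ∀ u, 0 < u → ∫ x, (1 - Real.cos (u * x)) * (wt Cp Cm x * |x| ^ (-1 - Y)) = u ^ Y * ∫ x, g x := by
    intro u hu
    have h1 := Measure.integral_comp_mul_left g u
    have h2 : ∀ x, g (u * x) = u ^ (-1 - Y) * ((1 - Real.cos (u * x)) * (wt Cp Cm x * |x| ^ (-1 - Y))) := by
      intro x
      have hw : wt Cp Cm (u * x) = wt Cp Cm x := by
        unfold wt; simp only [mul_pos_iff_of_pos_left hu]
      simp only [hg]
      rw [hw, abs_mul, abs_of_pos hu, Real.mul_rpow hu.le (abs_nonneg x)]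
      ring
    simp_rw [h2] at h1
    rw [integral_const_mul, abs_of_pos (by positivity), smul_eq_mul] at h1
    have h3 : u ^ Y * u ^ (-1 - Y) = u⁻¹ := by
      rw [← Real.rpow_add hu, ← Real.rpow_neg_one]; congr 1; ring
    have hp : u ^ (-1 - Y) ≠ 0 := (Real.rpow_pos_of_pos hu _).ne'
    rw [← h3] at h1
    have h4 : u ^ (-1 - Y) * ∫ x, (1 - Real.cos (u * x)) * (wt Cp Cm x * |x| ^ (-1 - Y)) = u ^ (-1 - Y) * (u ^ Y * ∫ x, g x) := by
      rw [h1]; ring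
    exact mul_left_cancel₀ hp h4
  have hcn : 0 < 1 + ‖c‖ := by positivity
  refine sq_err_aux (κ := c.re - ∫ x, g x) (C := ‖c‖ ^ 2) (u0 := (1 / (1 + ‖c‖)) ^ (1 / Y)) hY1 hY2 (by positivity) hm hr ?_
  intro u hu hu1
  have huY : u ^ Y * (1 + ‖c‖) ≤ 1 := by
    have : u ^ Y ≤ 1 / (1 + ‖c‖) := by
      calc u ^ Y ≤ ((1 / (1 + ‖c‖)) ^ (1 / Y)) ^ Y := by gcongr
        _ = _ := by rw [← Real.rpow_mul (by positivity), one_div Y, inv_mul_cancel₀ (by linarith), Real.rpow_one]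
    rwa [le_div_iff₀ hcn] at this
  have hup : 0 < u ^ Y := by positivity
  obtain ⟨hi, hI⟩ := int_one_sub_cos hc hY1 u
  have hie : Integrable (fun x => (1 - Real.cos (u * x)) * stE Y Cp Cm x) := by
    refine (hr.norm.const_mul (u ^ 2)).mono' (Measurable.aestronglyMeasurable (by fun_prop)) ?_
    refine Eventually.of_forall fun x => ?_
    have := one_sub_cos_le (u * x)
    rw [norm_mul, norm_mul, Real.norm_eq_abs, Real.norm_eq_abs, Real.norm_eq_abs, abs_of_nonneg (sq_nonneg x)]
    calc _ ≤ (u * x) ^ 2 / 2 * |stE Y Cp Cm x| := by gcongr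
        _ ≤ (u * x) ^ 2 * |stE Y Cp Cm x| := by gcongr; nlinarith [sq_nonneg (u * x)]
        _ = _ := by ring
  have hsub : ∫ x, (1 - Real.cos (u * x)) * (wt Cp Cm x * |x| ^ (-1 - Y)) = 
      (1 - (cfS c Y u).re) - ∫ x, (1 - Real.cos (u * x)) * stE Y Cp Cm x := by
    rw [← hI, ← integral_sub hi hie]
    refine integral_congr_ae (Eventually.of_forall fun x => ?_)
    simp only [stE]; rw [← hcd]; ring
  rw [hscale u hu] at hsub
  have hexp : |1 - (cfS c Y u).re - c.re * u ^ Y| ≤ ‖c‖ ^ 2 * u ^ (2 * Y) := by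
    rw [cfS_pos c (by linarith) hu]
    have hn : ‖-(c * ((u ^ Y : ℝ) : ℂ))‖ = ‖c‖ * u ^ Y := by
      rw [norm_neg, norm_mul, Complex.norm_real, Real.norm_eq_abs, abs_of_pos hup]
    have h1 := Complex.norm_exp_sub_one_sub_id_le (x := -(c * ((u ^ Y : ℝ) : ℂ))) (by rw [hn]; nlinarith)
    rw [hn] at h1
    have h2 := (Complex.abs_re_le_norm _).trans h1
    rw [Complex.sub_re, Complex.sub_re, Complex.neg_re, Complex.re_mul_ofReal, Complex.one_re] at h2
    have e2 : u ^ (2 * Y) = (u ^ Y) ^ 2 := by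
      rw [sq, ← Real.rpow_add hu]; congr 1; ring
    rw [e2, ← mul_pow]
    refine le_trans (le_of_eq ?_) h2
    rw [← abs_neg]; congr 1; ring
  refine le_trans (le_of_eq ?_) hexp
  congr 1
  linarith



/-- truncation indicator -/
def ind (ε x : ℝ) : ℝ := Set.indicator {x : ℝ | |x| ≤ ε} (fun _ => (1 : ℝ)) x

lemma ind_of_le {ε x : ℝ} (h : |x| ≤ ε) : ind ε x = 1 := by
  unfold ind; rw [indicator_of_mem]; exact h

lemma ind_of_gt {ε x : ℝ} (h : ε < |x|) : ind ε x = 0 := by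
  unfold ind; rw [indicator_of_notMem]; simpa using h

lemma ind_meas (ε : ℝ) : Measurable (ind ε) :=
  measurable_const.indicator (measurableSet_le (by fun_prop) measurable_const)

lemma ind_nonneg (ε x : ℝ) : 0 ≤ ind ε x := by
  rcases le_or_gt |x| ε with h | h
  · rw [ind_of_le h]; exact zero_le_one
  · rw [ind_of_gt h]

lemma ind_le_one (ε x : ℝ) : ind ε x ≤ 1 := by
  rcases le_or_gt |x| ε with h | h
  · rw [ind_of_le h]
  · rw [ind_of_gt h]; exact zero_le_one

lemma near_int {R s : ℝ} (hR : 0 ≤ R) (hs : -1 < s) :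
    Integrable (fun y : ℝ => ind R y * |y| ^ s) ∧ ∫ y, ind R y * |y| ^ s = 2 * (R ^ (s + 1) / (s + 1)) := by
  have e : ∀ y : ℝ, 0 < y → ind R y * |y| ^ s = (Iic R).indicator (fun x => x ^ s) y := by
    intro y hy
    rw [abs_of_pos hy]
    rcases le_or_gt y R with h | h
    · rw [ind_of_le (by rwa [abs_of_pos hy]), indicator_of_mem (by exact h), one_mul]
    · rw [ind_of_gt (by rwa [abs_of_pos hy]), indicator_of_notMem (by simpa using h), zero_mul]
  have h1 : IntegrableOn (fun y : ℝ => ind R y * |y| ^ s) (Ioi 0) := by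
    rw [integrableOn_congr_fun (s := Ioi (0:ℝ)) (fun y hy => e y hy) measurableSet_Ioi]
    rw [IntegrableOn, integrable_indicator_iff measurableSet_Iic, IntegrableOn, Measure.restrict_restrict measurableSet_Iic]
    have := (intervalIntegral.intervalIntegrable_rpow' (a := 0) (b := R) hs).1
    rwa [inter_comm, Ioi_inter_Iic]
  have h2 : Integrable (fun y : ℝ => ind R y * |y| ^ s) := by
    refine integrable_of_halves h1 ?_
    refine h1.congr (Eventually.of_forall fun y => ?_)
    simp only [ind, abs_neg, indicator, mem_ofPred_eq]
  refine ⟨h2, ?_⟩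
  have e3 : ∀ y : ℝ, ind R y * |y| ^ s = (fun z => ind R z * |z| ^ s) |y| := by
    intro y
    simp only [ind, abs_abs, indicator, mem_ofPred_eq]
  rw [integral_congr_ae (Eventually.of_forall e3), integral_comp_abs (f := fun z => ind R z * |z| ^ s)]
  congr 1
  rw [setIntegral_congr_fun measurableSet_Ioi (fun y hy => e y hy), integral_indicator measurableSet_Iic,
    Measure.restrict_restrict measurableSet_Iic, inter_comm, Ioi_inter_Iic, ← intervalIntegral.integral_of_le hR,
    integral_rpow (Or.inl hs), Real.zero_rpow (by linarith), sub_zero]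

lemma far_int {R s : ℝ} (hR : 0 < R) (hs : s < -1) :
    Integrable (fun y : ℝ => (1 - ind R y) * |y| ^ s) ∧
      ∫ y, (1 - ind R y) * |y| ^ s = 2 * (-R ^ (s + 1) / (s + 1)) := by
  have e : ∀ y : ℝ, 0 < y → (1 - ind R y) * |y| ^ s = (Ioi R).indicator (fun x => x ^ s) y := by
    intro y hy
    rw [abs_of_pos hy]
    rcases le_or_gt y R with h | h
    · rw [ind_of_le (by rwa [abs_of_pos hy]), indicator_of_notMem (by simpa using h)]; simp
    · rw [ind_of_gt (by rwa [abs_of_pos hy]), indicator_of_mem (by exact h)]; simp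
  have hset : Ioi R ∩ Ioi 0 = Ioi R := by rw [Ioi_inter_Ioi, max_eq_left hR.le]
  have h1 : IntegrableOn (fun y : ℝ => (1 - ind R y) * |y| ^ s) (Ioi 0) := by
    rw [integrableOn_congr_fun (s := Ioi (0:ℝ)) (fun y hy => e y hy) measurableSet_Ioi]
    rw [IntegrableOn, integrable_indicator_iff measurableSet_Ioi, IntegrableOn, Measure.restrict_restrict measurableSet_Ioi, hset]
    exact integrableOn_Ioi_rpow_of_lt hs hR
  have h2 : Integrable (fun y : ℝ => (1 - ind R y) * |y| ^ s) := by
    refine integrable_of_halves h1 ?_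
    refine h1.congr (Eventually.of_forall fun y => ?_)
    simp only [ind, abs_neg, indicator, mem_ofPred_eq]
  refine ⟨h2, ?_⟩
  have e3 : ∀ y : ℝ, (1 - ind R y) * |y| ^ s = (fun z => (1 - ind R z) * |z| ^ s) |y| := by
    intro y
    simp only [ind, abs_abs, indicator, mem_ofPred_eq]
  rw [integral_congr_ae (Eventually.of_forall e3), integral_comp_abs (f := fun z => (1 - ind R z) * |z| ^ s)]
  congr 1
  rw [setIntegral_congr_fun measurableSet_Ioi (fun y hy => e y hy), integral_indicator measurableSet_Ioi,
    Measure.restrict_restrict measurableSet_Ioi, hset, integral_Ioi_rpow_of_lt hs hR]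

lemma mvt_step {g g' : ℝ → ℝ} {C : ℝ} {n : ℕ} (hC : 0 ≤ C) (h0 : g 0 = 0)
    (hd : ∀ t, |t| ≤ 1 / 2 → HasDerivAt g (g' t) t) (hb : ∀ t, |t| ≤ 1 / 2 → |g' t| ≤ C * |t| ^ n)
    (t : ℝ) (ht : |t| ≤ 1 / 2) : |g t| ≤ C * |t| ^ (n + 1) := by
  have hs : ∀ x ∈ Metric.closedBall (0:ℝ) |t|, |x| ≤ |t| := by
    intro x hx; simpa using hx
  have := (convex_closedBall (0:ℝ) |t|).norm_image_sub_le_of_norm_hasDerivWithin_le (f := g) (f' := g')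
    (C := C * |t| ^ n) (x := 0) (y := t)
    (fun x hx => (hd x ((hs x hx).trans ht)).hasDerivWithinAt)
    (fun x hx => (hb x ((hs x hx).trans ht)).trans (mul_le_mul_of_nonneg_left (pow_le_pow_left₀ (abs_nonneg x) (hs x hx) n) hC)) (by simp) (by simp)
  rw [h0, sub_zero, sub_zero, Real.norm_eq_abs, Real.norm_eq_abs] at this
  refine this.trans (le_of_eq (by ring))

lemma hasDeriv_one_add {β t : ℝ} (ht : |t| ≤ 1 / 2) :
    HasDerivAt (fun t : ℝ => (1 + t) ^ β) (β * (1 + t) ^ (β - 1)) t := by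
  have h1 : (1 + t) ≠ 0 := by have := abs_le.1 ht; linarith
  have := ((hasDerivAt_id t).const_add 1).rpow_const (p := β) (Or.inl h1)
  simpa using this

lemma taylor_aux (a : ℝ) : ∃ C : ℝ, 0 ≤ C ∧ ∀ t, |t| ≤ 1 / 2 →
    |(1 + t) ^ a - (1 + a * t + a * (a - 1) / 2 * t ^ 2 + a * (a - 1) * (a - 2) / 6 * t ^ 3)| ≤ C * |t| ^ 4 := by
  have b0 : ∀ β : ℝ, ∃ C : ℝ, 0 ≤ C ∧ ∀ t, |t| ≤ 1 / 2 → |(1 + t) ^ β| ≤ C * |t| ^ 0 := by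
    intro β
    refine ⟨2 ^ |β|, by positivity, fun t ht => ?_⟩
    have h := abs_le.1 ht
    have hp : 0 < 1 + t := by linarith
    rw [pow_zero, mul_one, abs_of_pos (Real.rpow_pos_of_pos hp _)]
    rcases le_total 0 β with hβ | hβ
    · rw [abs_of_nonneg hβ]; exact Real.rpow_le_rpow hp.le (by linarith) hβ
    · rw [abs_of_nonpos hβ, Real.rpow_neg (by norm_num), ← Real.inv_rpow (by norm_num)]
      exact Real.rpow_le_rpow_of_nonpos (by norm_num) (by linarith) hβ
  have b1 : ∀ β : ℝ, ∃ C : ℝ, 0 ≤ C ∧ ∀ t, |t| ≤ 1 / 2 → |(1 + t) ^ β - 1| ≤ C * |t| ^ 1 := by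
    intro β
    obtain ⟨C, hC, h⟩ := b0 (β - 1)
    refine ⟨|β| * C, by positivity, fun t ht => ?_⟩
    refine mvt_step (g := fun t => (1 + t) ^ β - 1) (g' := fun t => β * (1 + t) ^ (β - 1)) (by positivity) (by simp) ?_ ?_ t ht
    · intro t ht; exact (hasDeriv_one_add ht).sub_const 1
    · intro t ht; rw [abs_mul, mul_assoc]; gcongr; exact h t ht
  have b2 : ∀ β : ℝ, ∃ C : ℝ, 0 ≤ C ∧ ∀ t, |t| ≤ 1 / 2 → |(1 + t) ^ β - (1 + β * t)| ≤ C * |t| ^ 2 := by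
    intro β
    obtain ⟨C, hC, h⟩ := b1 (β - 1)
    refine ⟨|β| * C, by positivity, fun t ht => ?_⟩
    refine mvt_step (g := fun t => (1 + t) ^ β - (1 + β * t)) (g' := fun t => β * ((1 + t) ^ (β - 1) - 1)) (by positivity) (by simp) ?_ ?_ t ht
    · intro t ht
      have := (hasDeriv_one_add (β := β) ht).sub (((hasDerivAt_id t).const_mul β).const_add 1)
      exact this.congr_deriv (by ring)
    · intro t ht; rw [abs_mul, mul_assoc]; gcongr; exact h t ht
  have b3 : ∀ β : ℝ, ∃ C : ℝ, 0 ≤ C ∧ ∀ t, |t| ≤ 1 / 2 →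
      |(1 + t) ^ β - (1 + β * t + β * (β - 1) / 2 * t ^ 2)| ≤ C * |t| ^ 3 := by
    intro β
    obtain ⟨C, hC, h⟩ := b2 (β - 1)
    refine ⟨|β| * C, by positivity, fun t ht => ?_⟩
    refine mvt_step (g := fun t => (1 + t) ^ β - (1 + β * t + β * (β - 1) / 2 * t ^ 2)) (g' := fun t => β * ((1 + t) ^ (β - 1) - (1 + (β - 1) * t))) (by positivity) (by simp) ?_ ?_ t ht
    · intro t ht
      have := (hasDeriv_one_add (β := β) ht).sub ((((hasDerivAt_id t).const_mul β).const_add 1).add ((hasDerivAt_pow 2 t).const_mul (β * (β - 1) / 2)))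
      exact this.congr_deriv (by push_cast; ring)
    · intro t ht; rw [abs_mul, mul_assoc]; gcongr; exact h t ht
  obtain ⟨C, hC, h⟩ := b3 (a - 1)
  refine ⟨|a| * C, by positivity, fun t ht => ?_⟩
  refine mvt_step (g := fun t => (1 + t) ^ a - (1 + a * t + a * (a - 1) / 2 * t ^ 2 + a * (a - 1) * (a - 2) / 6 * t ^ 3))
    (g' := fun t => a * ((1 + t) ^ (a - 1) - (1 + (a - 1) * t + (a - 1) * (a - 1 - 1) / 2 * t ^ 2))) (by positivity) (by simp) ?_ ?_ t ht
  · intro t ht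
    have := (hasDeriv_one_add (β := a) ht).sub (((((hasDerivAt_id t).const_mul a).const_add 1).add
      ((hasDerivAt_pow 2 t).const_mul (a * (a - 1) / 2))).add ((hasDerivAt_pow 3 t).const_mul (a * (a - 1) * (a - 2) / 6)))
    exact this.congr_deriv (by push_cast; ring)
  · intro t ht; rw [abs_mul, mul_assoc]; gcongr; exact h t ht



lemma near_bound {f : ℝ → ℝ} (hf : Measurable f) {K q a ε v : ℝ} {k : ℕ} (hK : 0 ≤ K) (hq : q < 2 * k)
    (ha : 0 < a) (hε : 0 < ε) (h : ∀ y, y ≠ 0 → |f y| ≤ K * |y| ^ (-1 - q)) :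
    Integrable (fun y => (a * y) ^ (2 * k) * ind ε (a * y + v) * f y) ∧
    |∫ y, (a * y) ^ (2 * k) * ind ε (a * y + v) * f y| ≤
      K * (2 / (2 * k - q)) * a ^ q * (ε + |v|) ^ (2 * k - q) := by
  set R := (ε + |v|) / a with hR
  have hR0 : 0 < R := by positivity
  obtain ⟨hi, hI⟩ := near_int (R := R) (s := 2 * k - 1 - q) hR0.le (by linarith)
  have hpt : ∀ y, y ≠ 0 → |(a * y) ^ (2 * k) * ind ε (a * y + v) * f y| ≤
      K * a ^ (2 * k) * (ind R y * |y| ^ (2 * k - 1 - q)) := by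
    intro y hy
    rcases le_or_gt |a * y + v| ε with h1 | h1
    · have h2 : |y| ≤ R := by
        rw [hR, le_div_iff₀ ha]
        have : |a * y| ≤ ε + |v| := by
          have e : a * y = (a * y + v) - v := by ring
          rw [e]; exact (abs_sub _ _).trans (by linarith)
        rw [abs_mul, abs_of_pos ha] at this; linarith
      rw [ind_of_le h1, ind_of_le h2, abs_mul, mul_one, one_mul, abs_pow, abs_mul, abs_of_pos ha, mul_pow]
      have e : |y| ^ (2 * k - 1 - q) = |y| ^ (2 * k) * |y| ^ (-1 - q) := by
        rw [abs_pow_mul_rpow hy]; congr 1; push_cast; ring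
      rw [e]
      calc _ ≤ a ^ (2 * k) * |y| ^ (2 * k) * (K * |y| ^ (-1 - q)) := by gcongr; exact h y hy
        _ = _ := by ring
    · rw [ind_of_gt h1, mul_zero, zero_mul, abs_zero]
      have := ind_nonneg R y
      positivity
  have hae : ∀ᵐ y : ℝ, ‖(a * y) ^ (2 * k) * ind ε (a * y + v) * f y‖ ≤
      K * a ^ (2 * k) * (ind R y * |y| ^ (2 * k - 1 - q)) := by
    filter_upwards [compl_mem_ae_iff.2 (measure_singleton (0:ℝ))] with y hy using hpt y hy
  have hi' := hi.const_mul (K * a ^ (2 * k))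
  have hm := ind_meas ε
  refine ⟨hi'.mono' (Measurable.aestronglyMeasurable (by fun_prop)) hae, ?_⟩
  refine (norm_integral_le_of_norm_le hi' hae).trans (le_of_eq ?_)
  rw [integral_const_mul, hI, hR, Real.div_rpow (by positivity) ha.le]
  have e1 : (2 * (k:ℝ) - 1 - q + 1) = 2 * k - q := by ring
  have e2 : a ^ q = a ^ (2 * k) / a ^ (2 * k - q) := by
    rw [eq_div_iff (by positivity), ← Real.rpow_add ha, ← Real.rpow_natCast]; congr 1; push_cast; ring
  rw [e1, e2]
  have : 0 < a ^ (2 * k - q) := by positivity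
  have : (2 * k - q) ≠ 0 := by linarith
  field_simp

/-- normalized leading coefficient -/
def D1 (k : ℕ) (Y Cp Cm t : ℝ) : ℝ :=
  ∫ z, z ^ (2 * k) * ind 1 (z + t) * (wt Cp Cm z * |z| ^ (-1 - Y))

lemma wtp_bound {Y Cp Cm : ℝ} (hCp : 0 < Cp) (hCm : 0 < Cm) (y : ℝ) :
    |wt Cp Cm y * |y| ^ (-1 - Y)| ≤ (Cp + Cm) * |y| ^ (-1 - Y) := by
  have hp : 0 ≤ |y| ^ (-1 - Y) := by positivity
  rw [abs_mul, abs_of_nonneg hp]; gcongr; exact wt_abs hCp hCm y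

lemma wtp_meas (Y Cp Cm : ℝ) : Measurable (fun y => wt Cp Cm y * |y| ^ (-1 - Y)) := by
  have := wt_meas Cp Cm
  fun_prop

lemma D1_bound {k : ℕ} (hk : 1 ≤ k) {Y Cp Cm : ℝ} (hY2 : Y < 2) (hCp : 0 < Cp) (hCm : 0 < Cm) (t : ℝ) :
    |D1 k Y Cp Cm t| ≤ (Cp + Cm) * (2 / (2 * k - Y)) * (1 + |t|) ^ (2 * k - Y) := by
  have hk' : (1:ℝ) ≤ k := by exact_mod_cast hk
  have := (near_bound (wtp_meas Y Cp Cm) (K := Cp + Cm) (q := Y) (a := 1) (ε := 1) (v := t) (k := k) (by positivity) (by linarith)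
    one_pos one_pos (fun y _ => wtp_bound hCp hCm y)).2
  simpa [D1] using this

lemma D1_eq {k : ℕ} (hk : 1 ≤ k) {Y Cp Cm : ℝ} (hY2 : Y < 2) (hCp : 0 < Cp) (hCm : 0 < Cm) {t : ℝ}
    (ht : |t| ≤ 1 / 2) :
    D1 k Y Cp Cm t = (Cp * (1 + -t) ^ (2 * k - Y) + Cm * (1 + t) ^ (2 * k - Y)) / (2 * k - Y) := by
  have hk' : (1:ℝ) ≤ k := by exact_mod_cast hk
  have h := abs_le.1 ht
  have hi := (near_bound (wtp_meas Y Cp Cm) (K := Cp + Cm) (q := Y) (a := 1) (ε := 1) (v := t) (k := k) (by positivity) (by linarith)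
    one_pos one_pos (fun y _ => wtp_bound hCp hCm y)).1
  simp only [one_mul] at hi
  have key : ∀ R : ℝ, 0 ≤ R → ∀ C : ℝ, ∫ z in Ioi (0:ℝ), C * (Iic R).indicator (fun x => x ^ (2 * k - Y - 1)) z
      = C * (R ^ (2 * k - Y) / (2 * k - Y)) := by
    intro R hR C
    rw [integral_const_mul, integral_indicator measurableSet_Iic,
    Measure.restrict_restrict measurableSet_Iic, inter_comm, Ioi_inter_Iic, ← intervalIntegral.integral_of_le hR,
    integral_rpow (Or.inl (by linarith)), Real.zero_rpow (by linarith), sub_zero, sub_add_cancel]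
  unfold D1
  rw [integral_halves hi, add_div, mul_div_assoc, mul_div_assoc]
  congr 1
  · rw [← key _ (by linarith)]
    refine setIntegral_congr_fun measurableSet_Ioi fun z (hz : 0 < z) => ?_
    rw [wt, if_pos hz]
    rcases le_or_gt z (1 + -t) with h1 | h1
    · rw [ind_of_le (by rw [abs_le]; constructor <;> linarith), indicator_of_mem (by exact h1), abs_of_pos hz]
      have e : z ^ (2 * k - Y - 1) = z ^ (2 * k) * z ^ (-1 - Y) := by
        rw [← Real.rpow_natCast, ← Real.rpow_add hz]; congr 1; push_cast; ring
      rw [e]; ring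
    · rw [ind_of_gt (by rw [lt_abs]; left; linarith), indicator_of_notMem (by simpa using h1)]; ring
  · rw [← key _ (by linarith)]
    refine setIntegral_congr_fun measurableSet_Ioi fun z (hz : 0 < z) => ?_
    rw [wt, if_neg (by linarith), abs_neg, Even.neg_pow (even_two_mul k)]
    rcases le_or_gt z (1 + t) with h1 | h1
    · rw [ind_of_le (by rw [abs_le]; constructor <;> linarith), indicator_of_mem (by exact h1), abs_of_pos hz]
      have e : z ^ (2 * k - Y - 1) = z ^ (2 * k) * z ^ (-1 - Y) := by
        rw [← Real.rpow_natCast, ← Real.rpow_add hz]; congr 1; push_cast; ring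
      rw [e]; ring
    · rw [ind_of_gt (by rw [lt_abs]; right; linarith), indicator_of_notMem (by simpa using h1)]; ring

/-- cubic Taylor polynomial of `D1` -/
def T3 (k : ℕ) (Y Cp Cm t : ℝ) : ℝ :=
  (Cp + Cm) / (2 * k - Y) + (Cm - Cp) * t + (Cp + Cm) * (2 * k - Y - 1) / 2 * t ^ 2
    + (Cm - Cp) * (2 * k - Y - 1) * (2 * k - Y - 2) / 6 * t ^ 3

lemma pow_le_16 {x : ℝ} (hx : 1 / 2 < x) :
    1 ≤ 16 * x ^ 4 ∧ x ≤ 16 * x ^ 4 ∧ x ^ 2 ≤ 16 * x ^ 4 ∧ x ^ 3 ≤ 16 * x ^ 4 := by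
  have h0 : 0 < x := by linarith
  have h1 : 1 ≤ 2 * x := by linarith
  have a4 : 1 ≤ (2 * x) ^ 4 := one_le_pow₀ h1
  have a3 : 1 ≤ (2 * x) ^ 3 := one_le_pow₀ h1
  have a2 : 1 ≤ (2 * x) ^ 2 := one_le_pow₀ h1
  have p4 : 0 < x ^ 4 := by positivity
  refine ⟨?_, ?_, ?_, ?_⟩
  · calc (1:ℝ) ≤ (2 * x) ^ 4 := a4
      _ = _ := by ring
  · calc x ≤ x * (2 * x) ^ 3 := le_mul_of_one_le_right h0.le a3
      _ = 8 * x ^ 4 := by ring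
      _ ≤ _ := by linarith
  · calc x ^ 2 ≤ x ^ 2 * (2 * x) ^ 2 := le_mul_of_one_le_right (by positivity) a2
      _ = 4 * x ^ 4 := by ring
      _ ≤ _ := by linarith
  · calc x ^ 3 ≤ x ^ 3 * (2 * x) := le_mul_of_one_le_right (by positivity) h1
      _ = 2 * x ^ 4 := by ring
      _ ≤ _ := by linarith

set_option maxHeartbeats 1000000 in
lemma D1_taylor {k : ℕ} (hk : 1 ≤ k) {Y Cp Cm : ℝ} (hY1 : 1 < Y) (hY2 : Y < 2) (hCp : 0 < Cp) (hCm : 0 < Cm) :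
    ∃ C : ℝ, 0 ≤ C ∧ ∀ t, |D1 k Y Cp Cm t - T3 k Y Cp Cm t| ≤ C * (t ^ 4 + t ^ (2 * k + 4)) := by
  have hk' : (1:ℝ) ≤ k := by exact_mod_cast hk
  obtain ⟨C, hC, hT⟩ := taylor_aux (2 * k - Y)
  set α := 2 * (k:ℝ) - Y with hα
  have hα0 : 0 < α := by rw [hα]; linarith
  set c0 := (Cp + Cm) / α with hc0
  set c1 := (Cm - Cp) with hc1
  set c2 := (Cp + Cm) * (α - 1) / 2 with hc2
  set c3 := (Cm - Cp) * (α - 1) * (α - 2) / 6 with hc3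
  have hT3 : ∀ t, T3 k Y Cp Cm t = c0 + c1 * t + c2 * t ^ 2 + c3 * t ^ 3 := fun t => by
    simp only [T3]; rw [← hα]
  set M1 := (Cp + Cm) * C / α with hM1
  set M2 := (Cp + Cm) * (2 / α) * 9 ^ k * 16 with hM2
  set M3 := (|c0| + |c1| + |c2| + |c3|) * 16 with hM3
  refine ⟨M1 + M2 + M3, by positivity, fun t => ?_⟩
  have et : t ^ 4 = |t| ^ 4 := by rw [← abs_pow, abs_of_nonneg]; positivity
  have et2 : t ^ (2 * k + 4) = |t| ^ (2 * k + 4) := by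
    rw [← abs_pow, abs_of_nonneg]; exact (Even.add (even_two_mul k) (by decide)).pow_nonneg t
  rw [et, et2]
  have hM10 : 0 ≤ M1 := by positivity
  have hM20 : 0 ≤ M2 := by positivity
  have hM30 : 0 ≤ M3 := by positivity
  have p4 : 0 ≤ |t| ^ 4 := by positivity
  have p24 : 0 ≤ |t| ^ (2 * k + 4) := by positivity
  rcases le_or_gt |t| (1 / 2) with ht | ht
  · have h1 := hT t ht
    have h2 := hT (-t) (by rwa [abs_neg])
    rw [abs_neg] at h2
    have e : D1 k Y Cp Cm t - T3 k Y Cp Cm t =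
        (Cp / α) * ((1 + -t) ^ α - (1 + α * -t + α * (α - 1) / 2 * (-t) ^ 2 + α * (α - 1) * (α - 2) / 6 * (-t) ^ 3)) +
        (Cm / α) * ((1 + t) ^ α - (1 + α * t + α * (α - 1) / 2 * t ^ 2 + α * (α - 1) * (α - 2) / 6 * t ^ 3)) := by
      rw [D1_eq hk hY2 hCp hCm ht, hT3, ← hα, hc0, hc1, hc2, hc3]
      field_simp
      ring
    rw [e]
    have : |(Cp / α) * ((1 + -t) ^ α - (1 + α * -t + α * (α - 1) / 2 * (-t) ^ 2 + α * (α - 1) * (α - 2) / 6 * (-t) ^ 3)) +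
        (Cm / α) * ((1 + t) ^ α - (1 + α * t + α * (α - 1) / 2 * t ^ 2 + α * (α - 1) * (α - 2) / 6 * t ^ 3))| ≤
        (Cp / α) * (C * |t| ^ 4) + (Cm / α) * (C * |t| ^ 4) := by
      refine (abs_add_le _ _).trans ?_
      rw [abs_mul, abs_mul, abs_of_pos (by positivity : 0 < Cp / α), abs_of_pos (by positivity : 0 < Cm / α)]
      gcongr
    refine this.trans ?_
    have e2 : (Cp / α) * (C * |t| ^ 4) + (Cm / α) * (C * |t| ^ 4) = M1 * |t| ^ 4 := by
      rw [hM1]; field_simp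
    rw [e2]
    have := mul_nonneg hM20 (add_nonneg p4 p24)
    have := mul_nonneg hM30 (add_nonneg p4 p24)
    have := mul_nonneg hM10 p24
    linarith
  · have h1 := D1_bound hk hY2 hCp hCm t
    rw [← hα] at h1
    have h2 : (1 + |t|) ^ α ≤ 9 ^ k * 16 * |t| ^ (2 * k + 4) := by
      calc (1 + |t|) ^ α ≤ (1 + |t|) ^ ((2 * k : ℕ) : ℝ) :=
            Real.rpow_le_rpow_of_exponent_le (by linarith) (by rw [hα]; push_cast; linarith)
        _ = (1 + |t|) ^ (2 * k) := by rw [Real.rpow_natCast]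
        _ ≤ (3 * |t|) ^ (2 * k) := by gcongr; linarith
        _ = 9 ^ k * |t| ^ (2 * k) * 1 := by rw [mul_pow, pow_mul]; norm_num
        _ ≤ 9 ^ k * |t| ^ (2 * k) * (2 * |t|) ^ 4 := by
            gcongr; exact one_le_pow₀ (by linarith)
        _ = _ := by ring
    have h3 : |T3 k Y Cp Cm t| ≤ M3 * |t| ^ 4 := by
      rw [hT3]
      have b : |c0 + c1 * t + c2 * t ^ 2 + c3 * t ^ 3| ≤ |c0| + |c1| * |t| + |c2| * |t| ^ 2 + |c3| * |t| ^ 3 := by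
        refine (abs_add_le _ _).trans (add_le_add ((abs_add_le _ _).trans (add_le_add ((abs_add_le _ _).trans (add_le_add le_rfl ?_)) ?_)) ?_)
        all_goals simp only [abs_mul, abs_pow, le_refl]
      refine b.trans ?_
      obtain ⟨q0, q1, q2, q3⟩ := pow_le_16 ht
      have := mul_le_mul_of_nonneg_left q0 (abs_nonneg c0)
      have := mul_le_mul_of_nonneg_left q1 (abs_nonneg c1)
      have := mul_le_mul_of_nonneg_left q2 (abs_nonneg c2)
      have := mul_le_mul_of_nonneg_left q3 (abs_nonneg c3)
      rw [hM3]; linarith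
    refine (abs_sub _ _).trans ?_
    have h4 : (Cp + Cm) * (2 / α) * (1 + |t|) ^ α ≤ M2 * |t| ^ (2 * k + 4) := by
      calc _ ≤ (Cp + Cm) * (2 / α) * (9 ^ k * 16 * |t| ^ (2 * k + 4)) := by gcongr
        _ = _ := by rw [hM2]; ring
    have := mul_nonneg hM20 p4
    have := mul_nonneg hM10 (add_nonneg p4 p24)
    have := mul_nonneg hM30 p24
    linarith



lemma D_scale {k : ℕ} {Y Cp Cm a ε v : ℝ} (ha : 0 < a) (hε : 0 < ε) :
    ∫ y, (a * y) ^ (2 * k) * ind ε (a * y + v) * (wt Cp Cm y * |y| ^ (-1 - Y)) =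
      a ^ Y * ε ^ (2 * (k:ℝ) - Y) * D1 k Y Cp Cm (v / ε) := by
  set b := a / ε with hb
  have hb0 : 0 < b := by positivity
  set g : ℝ → ℝ := fun z => z ^ (2 * k) * ind 1 (z + v / ε) * (wt Cp Cm z * |z| ^ (-1 - Y)) with hg
  have h1 := Measure.integral_comp_mul_left g b
  have h2 : ∀ y, (a * y) ^ (2 * k) * ind ε (a * y + v) * (wt Cp Cm y * |y| ^ (-1 - Y)) =
      ε ^ (2 * k) * b ^ (1 + Y) * g (b * y) := by
    intro y
    have hw : wt Cp Cm (b * y) = wt Cp Cm y := by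
      unfold wt; simp only [mul_pos_iff_of_pos_left hb0]
    have hay : a * y = ε * (b * y) := by rw [hb]; field_simp
    have hind : ind ε (a * y + v) = ind 1 (b * y + v / ε) := by
      have e : a * y + v = ε * (b * y + v / ε) := by rw [hay]; field_simp
      have e2 : |a * y + v| = ε * |b * y + v / ε| := by rw [e, abs_mul, abs_of_pos hε]
      rcases le_or_gt |b * y + v / ε| 1 with h | h
      · rw [ind_of_le h, ind_of_le]; rw [e2]; nlinarith
      · rw [ind_of_gt h, ind_of_gt]; rw [e2]; nlinarith
    simp only [hg]
    rw [hind, hw, hay, abs_mul, abs_of_pos hb0, Real.mul_rpow hb0.le (abs_nonneg y)]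
    have e3 : b ^ (1 + Y) * b ^ (-1 - Y) = 1 := by
      rw [← Real.rpow_add hb0]; norm_num
    linear_combination (-(ε ^ (2 * k) * (b * y) ^ (2 * k) * ind 1 (b * y + v / ε) * (wt Cp Cm y * |y| ^ (-1 - Y)))) * e3
  simp_rw [h2]
  rw [integral_const_mul, h1, abs_of_pos (by positivity), smul_eq_mul]
  have e4 : ε ^ (2 * k) * b ^ (1 + Y) * b⁻¹ = a ^ Y * ε ^ (2 * (k:ℝ) - Y) := by
    rw [mul_assoc, ← Real.rpow_neg_one b, ← Real.rpow_add hb0, hb, Real.div_rpow ha.le hε.le,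
      Real.rpow_sub hε]
    have : (2 * (k:ℝ)) = ((2 * k : ℕ) : ℝ) := by push_cast; ring
    rw [this, Real.rpow_natCast]
    have e5 : 1 + Y + -1 = Y := by ring
    rw [e5]; ring
  rw [← mul_assoc, e4]; rfl

lemma H_decomp {k : ℕ} (hk : 1 ≤ k) {Y Cp Cm : ℝ} (hY1 : 1 < Y) (hY2 : Y < 2) (hCp : 0 < Cp) (hCm : 0 < Cm)
    (μ : Measure ℝ) [IsFiniteMeasure μ] (hμ : ∀ u : ℝ, charFun μ u = cfS (stC Y Cp Cm) Y u)
    {a ε v : ℝ} (ha : 0 < a) (hε : 0 < ε) :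
    ∫ y, (a * y) ^ (2 * k) * ind ε (a * y + v) ∂μ = a ^ Y * ε ^ (2 * (k:ℝ) - Y) * D1 k Y Cp Cm (v / ε) +
      ∫ y, (a * y) ^ (2 * k) * ind ε (a * y + v) * stE Y Cp Cm y := by
  have hk' : (1:ℝ) ≤ k := by exact_mod_cast hk
  have hm := ind_meas ε
  obtain ⟨K, hK, hb⟩ := stE_bound hY1 hY2 hCp hCm
  have hc := stC_re hY1 hY2 hCp hCm
  rw [density_of_cf hc hY1 μ hμ _ (by fun_prop) ((ε + |v|) ^ (2 * k))]
  · rw [← D_scale ha hε, ← integral_add]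
    · refine integral_congr_ae (Eventually.of_forall fun y => ?_)
      simp only [stE]; ring
    · exact (near_bound (wtp_meas Y Cp Cm) (K := Cp + Cm) (q := Y) (k := k) (by positivity) (by linarith)
        ha hε (fun y _ => wtp_bound hCp hCm y)).1
    · exact (near_bound (stE_meas hY1 hY2 hCp hCm) (q := Y) (k := k) hK (by linarith)
        ha hε (fun y hy => (hb y hy).2)).1
  · intro y
    rcases le_or_gt |a * y + v| ε with h1 | h1
    · rw [ind_of_le h1, mul_one, abs_pow]
      gcongr
      have e : a * y = (a * y + v) - v := by ring
      rw [e]; exact (abs_sub _ _).trans (by linarith)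
    · rw [ind_of_gt h1, mul_zero, abs_zero]; positivity

lemma far_bound {Y Cp Cm : ℝ} (hY1 : 1 < Y) (hY2 : Y < 2) (hCp : 0 < Cp) (hCm : 0 < Cm) :
    ∃ C : ℝ, 0 ≤ C ∧ ∀ a ε v : ℝ, 0 < a → 0 < ε → |v| ≤ ε / 2 →
      |∫ y, (a * y) ^ 2 * ind ε (a * y + v) * stE Y Cp Cm y| ≤ C * (a ^ (2 * Y) * ε ^ (2 - 2 * Y)) := by
  obtain ⟨K, hK, hb⟩ := stE_bound hY1 hY2 hCp hCm
  have hpos : 0 < 2 * Y - 2 := by linarith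
  refine ⟨K * (2 / (2 * Y - 2)) * (1 / 2) ^ (2 - 2 * Y), by positivity, fun a ε v ha hε hv => ?_⟩
  set R := ε / 2 / a with hR
  have hR0 : 0 < R := by positivity
  obtain ⟨hi, hI⟩ := far_int (R := R) (s := 1 - 2 * Y) hR0 (by linarith)
  have h0 := stE_sq_int hY1 hY2 hCp hCm
  have hs := stE_sq_integrable hY1 hY2 hCp hCm
  have hn := (near_bound (v := v) (stE_meas hY1 hY2 hCp hCm) (q := Y) (k := 1) hK (by push_cast; linarith)
        ha hε (fun y hy => (hb y hy).2)).1
  simp only [mul_one] at hn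
  have e : ∫ y, (a * y) ^ 2 * ind ε (a * y + v) * stE Y Cp Cm y =
      - ∫ y, (a * y) ^ 2 * (1 - ind ε (a * y + v)) * stE Y Cp Cm y := by
    have h1 : ∫ y, a ^ 2 * (y ^ 2 * stE Y Cp Cm y) = 0 := by rw [integral_const_mul, h0, mul_zero]
    have h2 : ∫ y, (a * y) ^ 2 * (1 - ind ε (a * y + v)) * stE Y Cp Cm y =
        ∫ y, (a ^ 2 * (y ^ 2 * stE Y Cp Cm y) - (a * y) ^ 2 * ind ε (a * y + v) * stE Y Cp Cm y) := by
      refine integral_congr_ae (Eventually.of_forall fun y => ?_)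
      simp only; ring
    rw [h2, integral_sub (hs.const_mul _) hn, h1]; ring
  rw [e, abs_neg]
  have hpt : ∀ y, y ≠ 0 → |(a * y) ^ 2 * (1 - ind ε (a * y + v)) * stE Y Cp Cm y| ≤
      K * a ^ 2 * ((1 - ind R y) * |y| ^ (1 - 2 * Y)) := by
    intro y hy
    rcases le_or_gt |a * y + v| ε with h1 | h1
    · rw [ind_of_le h1, sub_self, mul_zero, zero_mul, abs_zero]
      have := ind_le_one R y
      have : 0 ≤ 1 - ind R y := by linarith
      positivity
    · have h2 : R < |y| := by
        rw [hR, div_lt_iff₀ ha]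
        have h3 := abs_add_le (a * y) v
        rw [abs_mul, abs_of_pos ha] at h3; linarith
      rw [ind_of_gt h1, ind_of_gt h2, sub_zero, mul_one, one_mul, abs_mul, abs_pow, abs_mul, abs_of_pos ha, mul_pow]
      have e : |y| ^ (1 - 2 * Y) = |y| ^ 2 * |y| ^ (-1 - 2 * Y) := by
        rw [abs_pow_mul_rpow hy]; congr 1; push_cast; ring
      rw [e]
      calc _ ≤ a ^ 2 * |y| ^ 2 * (K * |y| ^ (-1 - 2 * Y)) := by gcongr; exact (hb y hy).1
        _ = _ := by ring
  have hae : ∀ᵐ y : ℝ, ‖(a * y) ^ 2 * (1 - ind ε (a * y + v)) * stE Y Cp Cm y‖ ≤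
      K * a ^ 2 * ((1 - ind R y) * |y| ^ (1 - 2 * Y)) := by
    filter_upwards [compl_mem_ae_iff.2 (measure_singleton (0:ℝ))] with y hy using hpt y hy
  refine (norm_integral_le_of_norm_le (hi.const_mul (K * a ^ 2)) hae).trans (le_of_eq ?_)
  rw [integral_const_mul, hI, hR, Real.div_rpow (by positivity) ha.le, div_eq_mul_one_div ε 2,
    Real.mul_rpow hε.le (by positivity)]
  have e1 : (1 - 2 * Y + 1) = 2 - 2 * Y := by ring
  have e2 : a ^ (2 * Y) = a ^ 2 / a ^ (2 - 2 * Y) := by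
    rw [eq_div_iff (by positivity), ← Real.rpow_add ha, ← Real.rpow_natCast]; congr 1; push_cast; ring
  rw [e1, e2]
  have h3 : 0 < a ^ (2 - 2 * Y) := by positivity
  have h4 : (2 * Y - 2) ≠ 0 := by linarith
  have h5 : (2 - 2 * Y) = - (2 * Y - 2) := by ring
  have h6 : ∀ X : ℝ, - X / (2 - 2 * Y) = X / (2 * Y - 2) := by intro X; rw [h5, neg_div_neg_eq]
  rw [h6]
  field_simp

lemma one_add_pow_le {x : ℝ} (hx : 0 ≤ x) (n : ℕ) : (1 + x) ^ n ≤ 2 ^ n * (1 + x ^ n) := by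
  have h0 : 0 ≤ x ^ n := by positivity
  rcases le_total x 1 with h | h
  · calc (1 + x) ^ n ≤ 2 ^ n := by gcongr; linarith
      _ ≤ _ := le_mul_of_one_le_right (by positivity) (by linarith)
  · calc (1 + x) ^ n ≤ (2 * x) ^ n := by gcongr; linarith
      _ = 2 ^ n * x ^ n := mul_pow _ _ _
      _ ≤ _ := by gcongr; linarith

lemma E_bound {k : ℕ} (hk : 1 ≤ k) {Y Cp Cm : ℝ} (hY1 : 1 < Y) (hY2 : Y < 2) (hCp : 0 < Cp) (hCm : 0 < Cm) :
    ∃ C : ℝ, 0 ≤ C ∧ ∀ a ε v : ℝ, 0 < a → 0 < ε →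
      |∫ y, (a * y) ^ (2 * k) * ind ε (a * y + v) * stE Y Cp Cm y| ≤
        C * (a ^ (2 * Y) * ε ^ (2 * (k:ℝ) - 2 * Y) * (1 + (v / ε) ^ (2 * k))
          + a ^ Y * ε ^ (2 * (k:ℝ) - Y) * (v / ε) ^ 4) := by
  obtain ⟨K, hK, hb⟩ := stE_bound hY1 hY2 hCp hCm
  have hm := stE_meas hY1 hY2 hCp hCm
  have hfac : ∀ ε v q : ℝ, 0 < ε → (ε + |v|) ^ q = ε ^ q * (1 + |v / ε|) ^ q := by
    intro ε v q hε
    rw [← Real.mul_rpow hε.le (by positivity), abs_div, abs_of_pos hε]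
    congr 1; field_simp
  rcases Nat.lt_or_ge 1 k with h2 | h2
  · have hk2 : (2:ℝ) ≤ k := by exact_mod_cast h2
    have hpos : 0 < 2 * (k:ℝ) - 2 * Y := by linarith
    refine ⟨K * (2 / (2 * k - 2 * Y)) * 2 ^ (2 * k), by positivity, fun a ε v ha hε => ?_⟩
    have h := (near_bound (v := v) hm (q := 2 * Y) (k := k) hK (by linarith) ha hε (fun y hy => (hb y hy).1)).2
    refine h.trans ?_
    rw [hfac ε v _ hε]
    set t := v / ε
    have e : t ^ (2 * k) = |t| ^ (2 * k) := by rw [← abs_pow, abs_of_nonneg ((even_two_mul k).pow_nonneg t)]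
    have h3 : (1 + |t|) ^ (2 * (k:ℝ) - 2 * Y) ≤ 2 ^ (2 * k) * (1 + t ^ (2 * k)) := by
      rw [e]
      refine le_trans ?_ (one_add_pow_le (abs_nonneg t) _)
      rw [← Real.rpow_natCast]
      exact Real.rpow_le_rpow_of_exponent_le (by linarith [abs_nonneg t]) (by push_cast; linarith)
    have p : 0 ≤ a ^ Y * ε ^ (2 * (k:ℝ) - Y) * t ^ 4 := by positivity
    calc _ ≤ K * (2 / (2 * k - 2 * Y)) * a ^ (2 * Y) * (ε ^ (2 * (k:ℝ) - 2 * Y) * (2 ^ (2 * k) * (1 + t ^ (2 * k)))) := by gcongr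
      _ = K * (2 / (2 * k - 2 * Y)) * 2 ^ (2 * k) * (a ^ (2 * Y) * ε ^ (2 * (k:ℝ) - 2 * Y) * (1 + t ^ (2 * k))) := by ring
      _ ≤ _ := by gcongr; linarith
  · have hk1 : k = 1 := by omega
    subst hk1
    obtain ⟨C, hC, hf⟩ := far_bound hY1 hY2 hCp hCm
    have hpos : 0 < 2 - Y := by linarith
    refine ⟨C + K * (2 / (2 - Y)) * 36, by positivity, fun a ε v ha hε => ?_⟩
    simp only [mul_one, Nat.cast_one]
    set t := v / ε with ht
    have p1 : 0 ≤ a ^ Y * ε ^ (2 - Y) * t ^ 4 := by positivity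
    have p2 : 0 ≤ a ^ (2 * Y) * ε ^ (2 - 2 * Y) := by positivity
    have p3 : 0 ≤ a ^ (2 * Y) * ε ^ (2 - 2 * Y) * t ^ 2 := by positivity
    have p4 : 0 ≤ K * (2 / (2 - Y)) * 36 := by positivity
    rcases le_or_gt |v| (ε / 2) with h1 | h1
    · refine (hf a ε v ha hε h1).trans ?_
      have := mul_nonneg hC p1
      have := mul_nonneg hC p3
      have := mul_nonneg p4 p1
      have := mul_nonneg p4 p2
      have := mul_nonneg p4 p3
      linarith
    · have h := (near_bound (v := v) hm (q := Y) (k := 1) hK (by push_cast; linarith) ha hε (fun y hy => (hb y hy).2)).2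
      simp only [mul_one, Nat.cast_one] at h
      refine h.trans ?_
      rw [hfac ε v _ hε, ← ht]
      have ht1 : 1 / 2 < |t| := by
        rw [ht, abs_div, abs_of_pos hε, lt_div_iff₀ hε]; linarith
      have h3 : (1 + |t|) ^ (2 - Y) ≤ 36 * t ^ 4 := by
        calc (1 + |t|) ^ (2 - Y) ≤ (1 + |t|) ^ (2:ℝ) :=
              Real.rpow_le_rpow_of_exponent_le (by linarith) (by linarith)
          _ = (1 + |t|) ^ 2 := by rw [Real.rpow_two]
          _ ≤ (3 * |t|) ^ 2 := by gcongr; linarith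
          _ = 9 * |t| ^ 2 * 1 := by ring
          _ ≤ 9 * |t| ^ 2 * (2 * |t|) ^ 2 := by gcongr; exact one_le_pow₀ (by linarith)
          _ = 36 * (|t| ^ 2) ^ 2 := by ring
          _ = _ := by rw [sq_abs]; ring
      calc _ ≤ K * (2 / (2 - Y)) * a ^ Y * (ε ^ (2 - Y) * (36 * t ^ 4)) := by gcongr
        _ = (K * (2 / (2 - Y)) * 36) * (a ^ Y * ε ^ (2 - Y) * t ^ 4) := by ring
        _ ≤ _ := by
          have := mul_nonneg hC p1
          have := mul_nonneg hC p2
          have := mul_nonneg hC p3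
          have := mul_nonneg p4 p2
          have := mul_nonneg p4 p3
          linarith

lemma H_bound {k : ℕ} (hk : 1 ≤ k) {Y Cp Cm : ℝ} (hY1 : 1 < Y) (hY2 : Y < 2) (hCp : 0 < Cp) (hCm : 0 < Cm)
    (μ : Measure ℝ) [IsFiniteMeasure μ] (hμ : ∀ u : ℝ, charFun μ u = cfS (stC Y Cp Cm) Y u) :
    ∃ C : ℝ, 0 ≤ C ∧ ∀ h ε v : ℝ, 0 < h → 0 < ε →
      |(∫ y, (h ^ (1 / Y) * y) ^ (2 * k) * ind ε (h ^ (1 / Y) * y + v) ∂μ)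
        - h * ε ^ (2 * (k:ℝ) - Y) * T3 k Y Cp Cm (v / ε)| ≤
        C * (h ^ 2 * ε ^ (2 * (k:ℝ) - 2 * Y) * (1 + (v / ε) ^ (2 * k))
          + h * ε ^ (2 * (k:ℝ) - Y) * ((v / ε) ^ 4 + (v / ε) ^ (2 * k + 4))) := by
  obtain ⟨C1, hC1, h1⟩ := D1_taylor hk hY1 hY2 hCp hCm
  obtain ⟨C2, hC2, h2⟩ := E_bound hk hY1 hY2 hCp hCm
  refine ⟨C1 + C2, by positivity, fun h ε v hh hε => ?_⟩
  have ha : 0 < h ^ (1 / Y) := by positivity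
  have e1 : (h ^ (1 / Y)) ^ Y = h := by
    rw [← Real.rpow_mul hh.le, one_div, inv_mul_cancel₀ (by linarith), Real.rpow_one]
  have e2 : (h ^ (1 / Y)) ^ (2 * Y) = h ^ 2 := by
    rw [mul_comm, Real.rpow_mul ha.le, e1, Real.rpow_two]
  rw [H_decomp hk hY1 hY2 hCp hCm μ hμ ha hε]
  have h3 := h2 _ ε v ha hε
  rw [e1, e2] at h3
  rw [e1]
  have h4 := h1 (v / ε)
  set t := v / ε
  set Er := ∫ y, (h ^ (1 / Y) * y) ^ (2 * k) * ind ε (h ^ (1 / Y) * y + v) * stE Y Cp Cm y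
  have pe : 0 < h * ε ^ (2 * (k:ℝ) - Y) := by positivity
  have q1 : 0 ≤ t ^ (2 * k) := (even_two_mul k).pow_nonneg t
  have q2 : 0 ≤ t ^ (2 * k + 4) := (Even.add (even_two_mul k) (by decide)).pow_nonneg t
  have e : h * ε ^ (2 * (k:ℝ) - Y) * D1 k Y Cp Cm t + Er - h * ε ^ (2 * (k:ℝ) - Y) * T3 k Y Cp Cm t =
      h * ε ^ (2 * (k:ℝ) - Y) * (D1 k Y Cp Cm t - T3 k Y Cp Cm t) + Er := by ring
  rw [e]
  refine (abs_add_le _ _).trans ?_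
  rw [abs_mul, abs_of_pos pe]
  have h5 := mul_le_mul_of_nonneg_left h4 pe.le
  have r1 : 0 ≤ C1 * (h ^ 2 * ε ^ (2 * (k:ℝ) - 2 * Y) * (1 + t ^ (2 * k))) := by positivity
  have r2 : 0 ≤ C2 * (h * ε ^ (2 * (k:ℝ) - Y) * t ^ (2 * k + 4)) := by positivity
  calc _ ≤ _ := add_le_add h5 h3
    _ ≤ _ := by linarith



lemma gauss_affine_int (a b : ℝ) (n : ℕ) : Integrable (fun w : ℝ => (|a * w| + b) ^ n) (gaussianReal 0 1) := by
  have h1 : MemLp (id : ℝ → ℝ) ((n : ℝ≥0) : ℝ≥0∞) (gaussianReal 0 1) := memLp_id_gaussianReal n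
  have h2 : MemLp (fun w : ℝ => |a * w| + b) ((n : ℝ≥0) : ℝ≥0∞) (gaussianReal 0 1) :=
    (h1.const_mul a).norm.add (memLp_const b)
  have h3 : MemLp (fun w : ℝ => |a * w| + b) (n : ℝ≥0∞) (gaussianReal 0 1) := by simpa using h2
  have := h3.integrable_norm_pow'
  refine this.mono' (Measurable.aestronglyMeasurable (by fun_prop)) (Eventually.of_forall fun w => ?_)
  rw [norm_pow]

lemma gauss_pow_int (n : ℕ) : Integrable (fun w : ℝ => w ^ n) (gaussianReal 0 1) := by
  refine (gauss_affine_int 1 0 n).mono' (Measurable.aestronglyMeasurable (by fun_prop)) (Eventually.of_forall fun w => ?_)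
  rw [norm_pow]; simp

lemma gauss_m1 : ∫ w : ℝ, w ∂(gaussianReal 0 1) = 0 := integral_id_gaussianReal

lemma gauss_m2 : ∫ w : ℝ, w ^ 2 ∂(gaussianReal 0 1) = 1 := by
  have h := variance_id_gaussianReal (μ := 0) (v := 1)
  have h2 : Var[id; gaussianReal 0 1] = ∫ w : ℝ, w ^ 2 ∂(gaussianReal 0 1) := by
    rw [variance_eq_integral (by fun_prop)]
    have : ∫ w : ℝ, id w ∂(gaussianReal 0 1) = 0 := integral_id_gaussianReal
    rw [this]; simp
  rw [← h2, h]; simp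

lemma gauss_m3 : ∫ w : ℝ, w ^ 3 ∂(gaussianReal 0 1) = 0 := by
  have h := gaussianReal_map_neg (μ := 0) (v := 1)
  rw [neg_zero] at h
  have h2 : ∫ w : ℝ, w ^ 3 ∂(gaussianReal 0 1) = ∫ w : ℝ, (-w) ^ 3 ∂(gaussianReal 0 1) := by
    conv_lhs => rw [← h]
    rw [integral_map (by fun_prop) (by fun_prop)]
  have h3 : ∀ w : ℝ, (-w) ^ 3 = - w ^ 3 := fun w => by ring
  simp_rw [h3] at h2
  rw [integral_neg] at h2
  linarith

lemma gauss_cubic (a b c0 c1 c2 c3 : ℝ) :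
    Integrable (fun w : ℝ => c0 + c1 * (a * w + b) + c2 * (a * w + b) ^ 2 + c3 * (a * w + b) ^ 3) (gaussianReal 0 1) ∧
    ∫ w : ℝ, (c0 + c1 * (a * w + b) + c2 * (a * w + b) ^ 2 + c3 * (a * w + b) ^ 3) ∂(gaussianReal 0 1) =
      c0 + c1 * b + c2 * (a ^ 2 + b ^ 2) + c3 * (3 * a ^ 2 * b + b ^ 3) := by
  have e : ∀ w : ℝ, c0 + c1 * (a * w + b) + c2 * (a * w + b) ^ 2 + c3 * (a * w + b) ^ 3 =
      (c0 + c1 * b + c2 * b ^ 2 + c3 * b ^ 3) + (c1 * a + 2 * c2 * a * b + 3 * c3 * a * b ^ 2) * w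
       + (c2 * a ^ 2 + 3 * c3 * a ^ 2 * b) * w ^ 2 + c3 * a ^ 3 * w ^ 3 := fun w => by ring
  simp_rw [e]
  have i0 : Integrable (fun _ : ℝ => (c0 + c1 * b + c2 * b ^ 2 + c3 * b ^ 3)) (gaussianReal 0 1) := integrable_const _
  have i1 : Integrable (fun w : ℝ => (c1 * a + 2 * c2 * a * b + 3 * c3 * a * b ^ 2) * w) (gaussianReal 0 1) := by
    simpa using (gauss_pow_int 1).const_mul (c1 * a + 2 * c2 * a * b + 3 * c3 * a * b ^ 2)
  have i2 := (gauss_pow_int 2).const_mul (c2 * a ^ 2 + 3 * c3 * a ^ 2 * b)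
  have i3 := (gauss_pow_int 3).const_mul (c3 * a ^ 3)
  refine ⟨((i0.add i1).add i2).add i3, ?_⟩
  rw [integral_add (by exact (i0.add i1).add i2) i3, integral_add (by exact i0.add i1) i2, integral_add i0 i1,
    integral_const_mul, integral_const_mul, integral_const_mul, gauss_m1, gauss_m2, gauss_m3]
  simp
  ring

/-- Fubini step -/
lemma fubini_step {Ω : Type*} [MeasurableSpace Ω] (P : Measure Ω) [IsProbabilityMeasure P]
    (S : Ω → ℝ) (hS : Measurable S) (W : Ω → ℝ) (hWm : Measurable W) (hW : P.map W = gaussianReal 0 1)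
    (hind : IndepFun W S P) (k : ℕ) (l s b ε : ℝ) (hε : 0 < ε) :
    Integrable (fun w => ∫ y, (l * y) ^ (2 * k) * ind ε (l * y + (s * w + b)) ∂(P.map S)) (gaussianReal 0 1) ∧
    ∫ ω, (l * S ω) ^ (2 * k) * ind ε (l * S ω + (s * W ω + b)) ∂P =
      ∫ w, (∫ y, (l * y) ^ (2 * k) * ind ε (l * y + (s * w + b)) ∂(P.map S)) ∂(gaussianReal 0 1) := by
  have hm := ind_meas ε
  have : IsProbabilityMeasure (P.map S) := Measure.isProbabilityMeasure_map hS.aemeasurable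
  have hp := (indepFun_iff_map_prod_eq_prod_map_map hWm.aemeasurable hS.aemeasurable).1 hind
  set F : ℝ × ℝ → ℝ := fun z => (l * z.2) ^ (2 * k) * ind ε (l * z.2 + (s * z.1 + b)) with hF
  have hFm : Measurable F := by rw [hF]; fun_prop
  have e1 : ∫ ω, (l * S ω) ^ (2 * k) * ind ε (l * S ω + (s * W ω + b)) ∂P = ∫ z, F z ∂(P.map (fun ω => (W ω, S ω))) := by
    rw [integral_map (hWm.prodMk hS).aemeasurable hFm.aestronglyMeasurable]
  have hFi : Integrable F ((gaussianReal 0 1).prod (P.map S)) := by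
    have hB : Integrable (fun z : ℝ × ℝ => (|s * z.1| + (ε + |b|)) ^ (2 * k)) ((gaussianReal 0 1).prod (P.map S)) :=
      (gauss_affine_int s (ε + |b|) (2 * k)).comp_fst _
    refine hB.mono' hFm.aestronglyMeasurable (Eventually.of_forall fun z => ?_)
    simp only [hF]
    rcases le_or_gt |l * z.2 + (s * z.1 + b)| ε with h1 | h1
    · rw [ind_of_le h1, mul_one, norm_pow, Real.norm_eq_abs]
      gcongr
      have e : l * z.2 = (l * z.2 + (s * z.1 + b)) - (s * z.1 + b) := by ring
      rw [e]
      refine (abs_sub _ _).trans ?_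
      have := abs_add_le (s * z.1) b
      linarith
    · rw [ind_of_gt h1, mul_zero, norm_zero]; positivity
  refine ⟨hFi.integral_prod_left, ?_⟩
  rw [e1, hp, hW, integral_prod _ hFi]



lemma moment_bound (σ γ₀ : ℝ) (j : ℕ) : ∃ M : ℝ, 0 ≤ M ∧ ∀ h ε : ℝ, 0 < h → h ≤ 1 → 0 < ε →
    Integrable (fun w : ℝ => ((σ * √h * w + h * γ₀) / ε) ^ (2 * j)) (gaussianReal 0 1) ∧
    ∫ w : ℝ, ((σ * √h * w + h * γ₀) / ε) ^ (2 * j) ∂(gaussianReal 0 1) ≤ M * (h / ε ^ 2) ^ j := by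
  have hi := gauss_affine_int σ |γ₀| (2 * j)
  refine ⟨∫ w : ℝ, (|σ * w| + |γ₀|) ^ (2 * j) ∂(gaussianReal 0 1),
    integral_nonneg fun w => by positivity, fun h ε hh h1 hε => ?_⟩
  have hpt : ∀ w : ℝ, ((σ * √h * w + h * γ₀) / ε) ^ (2 * j) ≤ (|σ * w| + |γ₀|) ^ (2 * j) * (h / ε ^ 2) ^ j := by
    intro w
    have hs : √h * √h = h := Real.mul_self_sqrt hh.le
    have hs1 : √h ≤ 1 := Real.sqrt_le_one.2 h1
    have hs0 : 0 < √h := Real.sqrt_pos.2 hh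
    have a1 : |σ * √h * w + h * γ₀| ≤ √h * (|σ * w| + |γ₀|) := by
      refine (abs_add_le _ _).trans ?_
      have e1 : |σ * √h * w| = √h * |σ * w| := by
        rw [show σ * √h * w = √h * (σ * w) by ring, abs_mul, abs_of_pos hs0]
      have e2 : |h * γ₀| ≤ √h * |γ₀| := by
        rw [abs_mul, abs_of_pos hh]; gcongr; nlinarith
      rw [e1]; linarith
    have a2 : ((σ * √h * w + h * γ₀) / ε) ^ 2 ≤ (|σ * w| + |γ₀|) ^ 2 * (h / ε ^ 2) := by
      rw [← sq_abs, abs_div, abs_of_pos hε, div_pow, ← mul_div_assoc]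
      gcongr
      calc _ ≤ (√h * (|σ * w| + |γ₀|)) ^ 2 := by gcongr
        _ = (√h * √h) * (|σ * w| + |γ₀|) ^ 2 := by ring
        _ = _ := by rw [hs]; ring
    rw [pow_mul, pow_mul, ← mul_pow]
    gcongr
  have hintg : Integrable (fun w : ℝ => ((σ * √h * w + h * γ₀) / ε) ^ (2 * j)) (gaussianReal 0 1) := by
    refine (hi.mul_const ((h / ε ^ 2) ^ j)).mono' (Measurable.aestronglyMeasurable (by fun_prop)) ?_
    refine Eventually.of_forall fun w => ?_
    rw [Real.norm_eq_abs, abs_of_nonneg ((even_two_mul j).pow_nonneg _)]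
    exact hpt w
  refine ⟨hintg, ?_⟩
  rw [← integral_mul_const]
  exact integral_mono hintg (hi.mul_const _) hpt

set_option maxHeartbeats 1000000 in
lemma main_quant {Ω : Type*} [MeasurableSpace Ω] (P : Measure Ω) [IsProbabilityMeasure P]
    (Y Cp Cm σ : ℝ)
    (hY1 : 1 < Y) (hY2 : Y < 2) (hCp : 0 < Cp) (hCm : 0 < Cm)
    (S : Ω → ℝ) (hSmeas : Measurable S)
    (hScf : ∀ u : ℝ, ∫ ω, Complex.exp (Complex.I * u * S ω) ∂P = stableCF Y Cp Cm u)
    (W : Ω → ℝ) (hWmeas : Measurable W) (hW : P.map W = gaussianReal 0 1)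
    (hindep : IndepFun W S P)
    (γ₀ : ℝ) (k : ℕ) (hk : 1 ≤ k) :
    ∃ C : ℝ, 0 ≤ C ∧ ∀ h ε : ℝ, 0 < h → h ≤ 1 → 0 < ε → ε ≤ 1 → h ≤ ε ^ 2 →
      |(∫ ω, (h ^ (1 / Y) * S ω) ^ (2 * k) *
            ind ε (σ * (√h * W ω) + h ^ (1 / Y) * S ω + h * γ₀) ∂P)
        - ((Cp + Cm) / (2 * k - Y) * h * ε ^ (2 * (k : ℝ) - Y)
            + σ ^ 2 * (Cp + Cm) * (2 * k - 1 - Y) / 2 * h ^ 2 * ε ^ (2 * (k : ℝ) - Y - 2))| ≤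
      C * (h ^ 3 * ε ^ (2 * (k : ℝ) - 4 - Y) + h ^ 2 * ε ^ (2 * (k : ℝ) - 2 * Y)) := by
  have : IsProbabilityMeasure (P.map S) := Measure.isProbabilityMeasure_map hSmeas.aemeasurable
  have hμ : ∀ u : ℝ, charFun (P.map S) u = cfS (stC Y Cp Cm) Y u := by
    intro u
    rw [← stableCF_eq hY1, ← hScf u, charFun_apply_real, integral_map hSmeas.aemeasurable
      (Continuous.aestronglyMeasurable (by fun_prop))]
    refine integral_congr_ae (Eventually.of_forall fun ω => ?_)
    simp only; congr 1; ring
  obtain ⟨C, hC, hH⟩ := H_bound hk hY1 hY2 hCp hCm (P.map S) hμ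
  obtain ⟨M1, hM1, m1⟩ := moment_bound σ γ₀ k
  obtain ⟨M2, hM2, m2⟩ := moment_bound σ γ₀ 2
  obtain ⟨M3, hM3, m3⟩ := moment_bound σ γ₀ (k + 2)
  set c0 := (Cp + Cm) / (2 * (k:ℝ) - Y) with hc0
  set c1 := (Cm - Cp) with hc1
  set c2 := (Cp + Cm) * (2 * (k:ℝ) - Y - 1) / 2 with hc2
  set c3 := (Cm - Cp) * (2 * (k:ℝ) - Y - 1) * (2 * (k:ℝ) - Y - 2) / 6 with hc3
  set L1 := |c1 * γ₀| with hL1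
  set L2 := |c2 * γ₀ ^ 2| with hL2
  set L3 := |3 * c3 * σ ^ 2 * γ₀| with hL3
  set L4 := |c3 * γ₀ ^ 3| with hL4
  refine ⟨C * (1 + M1) + C * (M2 + M3) + L1 + L2 + L3 + L4, by positivity, fun h ε hh hh1 hε hε1 hhε => ?_⟩
  set A := ε ^ (2 * (k:ℝ) - Y) with hA
  set B := ε ^ (2 * (k:ℝ) - 2 * Y) with hB
  have hA0 : 0 < A := by positivity
  have hB0 : 0 < B := by positivity
  have eA4 : ε ^ (2 * (k:ℝ) - 4 - Y) = A / ε ^ 4 := by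
    rw [hA, eq_div_iff (by positivity), ← Real.rpow_natCast, ← Real.rpow_add hε]; congr 1; push_cast; ring
  have eA2 : ε ^ (2 * (k:ℝ) - Y - 2) = A / ε ^ 2 := by
    rw [hA, eq_div_iff (by positivity), ← Real.rpow_natCast, ← Real.rpow_add hε]; congr 1; push_cast; ring
  have hAB : A / ε ≤ B := by
    rw [hA, hB, ← Real.rpow_sub_one hε.ne']
    exact Real.rpow_le_rpow_of_exponent_ge hε hε1 (by linarith)
  have hδ1 : h / ε ^ 2 ≤ 1 := by rw [div_le_one (by positivity)]; exact hhε
  have hδ0 : 0 < h / ε ^ 2 := by positivity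
  -- Fubini
  obtain ⟨fi, fI⟩ := fubini_step P S hSmeas W hWmeas hW hindep k (h ^ (1 / Y)) (σ * √h) (h * γ₀) ε hε
  have eI : ∫ ω, (h ^ (1 / Y) * S ω) ^ (2 * k) *
            ind ε (σ * (√h * W ω) + h ^ (1 / Y) * S ω + h * γ₀) ∂P =
      ∫ ω, (h ^ (1 / Y) * S ω) ^ (2 * k) * ind ε (h ^ (1 / Y) * S ω + (σ * √h * W ω + h * γ₀)) ∂P := by
    refine integral_congr_ae (Eventually.of_forall fun ω => ?_)
    simp only; congr 2; ring
  rw [eI, fI, eA2, eA4]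
  set G : ℝ → ℝ := fun w => ∫ y, (h ^ (1 / Y) * y) ^ (2 * k) * ind ε (h ^ (1 / Y) * y + (σ * √h * w + h * γ₀)) ∂(P.map S) with hG
  -- cubic
  obtain ⟨ti, tI⟩ := gauss_cubic (σ * √h / ε) (h * γ₀ / ε) c0 c1 c2 c3
  have hT : ∀ w, T3 k Y Cp Cm ((σ * √h * w + h * γ₀) / ε) =
      c0 + c1 * (σ * √h / ε * w + h * γ₀ / ε) + c2 * (σ * √h / ε * w + h * γ₀ / ε) ^ 2
        + c3 * (σ * √h / ε * w + h * γ₀ / ε) ^ 3 := by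
    intro w
    have : (σ * √h * w + h * γ₀) / ε = σ * √h / ε * w + h * γ₀ / ε := by ring
    rw [this]; simp only [T3, hc0, hc1, hc2, hc3]
  simp_rw [← hT] at ti tI
  have hsq : (σ * √h / ε) ^ 2 = σ ^ 2 * h / ε ^ 2 := by
    rw [div_pow, mul_pow, Real.sq_sqrt hh.le]
  rw [hsq] at tI
  obtain ⟨mi1, mI1⟩ := m1 h ε hh hh1 hε
  obtain ⟨mi2, mI2⟩ := m2 h ε hh hh1 hε
  obtain ⟨mi3, mI3⟩ := m3 h ε hh hh1 hε
  have mi0 : Integrable (fun _ : ℝ => (1:ℝ)) (gaussianReal 0 1) := integrable_const _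
  have hdiff : |∫ w, G w ∂(gaussianReal 0 1) - h * A * ∫ w, T3 k Y Cp Cm ((σ * √h * w + h * γ₀) / ε) ∂(gaussianReal 0 1)| ≤
      C * (h ^ 2 * B * (1 + M1) + h * A * (h / ε ^ 2) ^ 2 * (M2 + M3)) := by
    rw [← integral_const_mul, ← integral_sub fi (ti.const_mul _)]
    have bi := (((mi0.add mi1).const_mul (h ^ 2 * B)).add ((mi2.add mi3).const_mul (h * A))).const_mul C
    refine (norm_integral_le_of_norm_le (f := fun w => G w - h * A * T3 k Y Cp Cm ((σ * √h * w + h * γ₀) / ε)) bi (Eventually.of_forall fun w => ?_)).trans ?_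
    · exact hH h ε (σ * √h * w + h * γ₀) hh hε
    · have e5 : ∫ w, C * (h ^ 2 * B * (1 + ((σ * √h * w + h * γ₀) / ε) ^ (2 * k)) +
          h * A * (((σ * √h * w + h * γ₀) / ε) ^ (2 * 2) + ((σ * √h * w + h * γ₀) / ε) ^ (2 * (k + 2)))) ∂(gaussianReal 0 1) =
          C * (h ^ 2 * B * (1 + ∫ w, ((σ * √h * w + h * γ₀) / ε) ^ (2 * k) ∂(gaussianReal 0 1)) +
          h * A * ((∫ w, ((σ * √h * w + h * γ₀) / ε) ^ (2 * 2) ∂(gaussianReal 0 1)) +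
            ∫ w, ((σ * √h * w + h * γ₀) / ε) ^ (2 * (k + 2)) ∂(gaussianReal 0 1))) := by
        have q1 : Integrable (fun w => h ^ 2 * B * (1 + ((σ * √h * w + h * γ₀) / ε) ^ (2 * k))) (gaussianReal 0 1) :=
          (mi0.add mi1).const_mul (h ^ 2 * B)
        have q2 : Integrable (fun w => h * A * (((σ * √h * w + h * γ₀) / ε) ^ (2 * 2) + ((σ * √h * w + h * γ₀) / ε) ^ (2 * (k + 2)))) (gaussianReal 0 1) :=
          (mi2.add mi3).const_mul (h * A)
        rw [integral_const_mul, integral_add q1 q2,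
          integral_const_mul, integral_const_mul, integral_add mi0 mi1, integral_add mi2 mi3]
        simp
      refine (le_of_eq e5).trans ?_
      have k1 : (h / ε ^ 2) ^ k ≤ 1 := pow_le_one₀ hδ0.le hδ1
      have k3 : (h / ε ^ 2) ^ (k + 2) ≤ (h / ε ^ 2) ^ 2 := pow_le_pow_of_le_one hδ0.le hδ1 (by omega)
      have n1 := mI1.trans (mul_le_of_le_one_right hM1 k1)
      have n3 := mI3.trans (mul_le_mul_of_nonneg_left k3 hM3)
      have n2 := add_le_add mI2 n3
      have n4 : h * A * ((∫ w, ((σ * √h * w + h * γ₀) / ε) ^ (2 * 2) ∂(gaussianReal 0 1)) +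
            ∫ w, ((σ * √h * w + h * γ₀) / ε) ^ (2 * (k + 2)) ∂(gaussianReal 0 1)) ≤ h * A * (h / ε ^ 2) ^ 2 * (M2 + M3) := by
        refine (mul_le_mul_of_nonneg_left n2 (by positivity)).trans (le_of_eq (by ring))
      have n5 : h ^ 2 * B * (1 + ∫ w, ((σ * √h * w + h * γ₀) / ε) ^ (2 * k) ∂(gaussianReal 0 1)) ≤ h ^ 2 * B * (1 + M1) := by
        gcongr
      exact mul_le_mul_of_nonneg_left (add_le_add n5 n4) hC
  rw [tI] at hdiff
  set I := ∫ w, G w ∂(gaussianReal 0 1)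
  set X := h ^ 3 * (A / ε ^ 4) with hX
  set Z := h ^ 2 * B with hZ
  have hX0 : 0 < X := by positivity
  have hZ0 : 0 < Z := by positivity
  have eX : h * A * (h / ε ^ 2) ^ 2 = X := by rw [hX]; field_simp
  rw [eX] at hdiff
  have eq : I - (c0 * h * A + σ ^ 2 * (Cp + Cm) * (2 * k - 1 - Y) / 2 * h ^ 2 * (A / ε ^ 2)) =
     (I - h * A * (c0 + c1 * (h * γ₀ / ε) + c2 * (σ ^ 2 * h / ε ^ 2 + (h * γ₀ / ε) ^ 2) +
        c3 * (3 * (σ ^ 2 * h / ε ^ 2) * (h * γ₀ / ε) + (h * γ₀ / ε) ^ 3)))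
      + ((c1 * γ₀) * (h ^ 2 * (A / ε)) + (c2 * γ₀ ^ 2) * (h ^ 3 * (A / ε ^ 2)) +
        (3 * c3 * σ ^ 2 * γ₀) * (h ^ 3 * (A / ε ^ 3)) + (c3 * γ₀ ^ 3) * (h ^ 4 * (A / ε ^ 3))) := by
    rw [hc2]; field_simp; ring
  rw [eq]
  have x1 : h ^ 2 * (A / ε) ≤ Z := by rw [hZ]; gcongr
  have x2 : h ^ 3 * (A / ε ^ 2) ≤ X := by
    rw [hX]; gcongr h ^ 3 * (A / ?_)
    exact pow_le_pow_of_le_one hε.le hε1 (by norm_num)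
  have x3 : h ^ 3 * (A / ε ^ 3) ≤ X := by
    rw [hX]; gcongr h ^ 3 * (A / ?_)
    exact pow_le_pow_of_le_one hε.le hε1 (by norm_num)
  have x4 : h ^ 4 * (A / ε ^ 3) ≤ X := by
    refine le_trans ?_ x3
    gcongr ?_ * (A / ε ^ 3)
    exact pow_le_pow_of_le_one hh.le hh1 (by norm_num)
  have absb : ∀ a x b : ℝ, 0 ≤ x → x ≤ b → |a * x| ≤ |a| * b := by
    intro a x b hx hxb
    rw [abs_mul, abs_of_nonneg hx]; gcongr
  have y1 := absb (c1 * γ₀) _ _ (by positivity) x1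
  have y2 := absb (c2 * γ₀ ^ 2) _ _ (by positivity) x2
  have y3 := absb (3 * c3 * σ ^ 2 * γ₀) _ _ (by positivity) x3
  have y4 := absb (c3 * γ₀ ^ 3) _ _ (by positivity) x4
  rw [← hL1] at y1
  rw [← hL2] at y2
  rw [← hL3] at y3
  rw [← hL4] at y4
  have tri : ∀ p q r s t : ℝ, |p + (q + r + s + t)| ≤ |p| + |q| + |r| + |s| + |t| := by
    intro p q r s t
    have t1 := abs_add_le p (q + r + s + t)
    have t2 := abs_add_le (q + r + s) t
    have t3 := abs_add_le (q + r) s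
    have t4 := abs_add_le q r
    linarith
  refine (tri _ _ _ _ _).trans ?_
  have z1 : 0 ≤ L1 := abs_nonneg _
  have z2 : 0 ≤ L2 := abs_nonneg _
  have z3 : 0 ≤ L3 := abs_nonneg _
  have z4 : 0 ≤ L4 := abs_nonneg _
  have s1 := mul_nonneg z1 hX0.le
  have s2 := mul_nonneg z2 hZ0.le
  have s3 := mul_nonneg z3 hZ0.le
  have s4 := mul_nonneg z4 hZ0.le
  have s5 : 0 ≤ C * (1 + M1) * X := by positivity
  have s6 : 0 ≤ C * (M2 + M3) * Z := by positivity
  linarith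


end Auxiliary

/-- Lemma C.4: expansion of the truncated even moments of the stable part:
`E(S_h^{2k} 1_{|σW_h + S_h + hγ₀| ≤ ε})`. -/
theorem truncated_stable_even_moments
    {Ω : Type*} [MeasurableSpace Ω] (P : Measure Ω) [IsProbabilityMeasure P]
    (Y Cp Cm σ : ℝ)
    (hY1 : 1 < Y) (hY2 : Y < 2) (hCp : 0 < Cp) (hCm : 0 < Cm) (hσ : 0 < σ)
    (S : Ω → ℝ) (hSmeas : Measurable S)
    (hScf : ∀ u : ℝ, ∫ ω, Complex.exp (Complex.I * u * S ω) ∂P = stableCF Y Cp Cm u)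
    (W : Ω → ℝ) (hWmeas : Measurable W) (hW : P.map W = gaussianReal 0 1)
    (hindep : IndepFun W S P)
    (γ₀ : ℝ) (k : ℕ) (hk : 1 ≤ k)
    -- the threshold `ε = ε(h)`
    (ε : ℝ → ℝ) (hεpos : ∀ h : ℝ, 0 < h → 0 < ε h)
    (hε0 : Tendsto ε (𝓝[>] (0 : ℝ)) (𝓝 0))
    (hεsqrt : Tendsto (fun h => ε h / Real.sqrt h) (𝓝[>] (0 : ℝ)) atTop) :
    ∃ R₁ R₂ R₃ : ℝ → ℝ,
      (∀ h : ℝ, 0 < h →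
        (∫ ω, (h ^ (1 / Y) * S ω) ^ (2 * k) *
            Set.indicator {x : ℝ | |x| ≤ ε h} (fun _ => (1 : ℝ))
              (σ * (Real.sqrt h * W ω) + h ^ (1 / Y) * S ω + h * γ₀) ∂P)
          = (Cp + Cm) / (2 * k - Y) * h * ε h ^ (2 * (k : ℝ) - Y)
            + σ ^ 2 * (Cp + Cm) * (2 * k - 1 - Y) / 2 * h ^ 2 * ε h ^ (2 * (k : ℝ) - Y - 2)
            + R₁ h + R₂ h + R₃ h) ∧
      R₁ =O[𝓝[>] (0 : ℝ)] (fun h => h ^ 3 * ε h ^ (2 * (k : ℝ) - 4 - Y)) ∧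
      R₂ =O[𝓝[>] (0 : ℝ)] (fun h => h ^ 2 * ε h ^ (2 * (k : ℝ) - 2 * Y)) ∧
      R₃ =O[𝓝[>] (0 : ℝ)]
        (fun h => ε h ^ (2 * (k : ℝ) - 1 - Y) * h ^ ((3 : ℝ) / 2) *
          Real.exp (-(ε h ^ 2) / (2 * σ ^ 2 * h))) := by
  obtain ⟨C, hC, hq⟩ := main_quant P Y Cp Cm σ hY1 hY2 hCp hCm S hSmeas hScf W hWmeas hW hindep γ₀ k hk
  set a : ℝ → ℝ := fun h => h ^ 3 * ε h ^ (2 * (k : ℝ) - 4 - Y) with ha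
  set b : ℝ → ℝ := fun h => h ^ 2 * ε h ^ (2 * (k : ℝ) - 2 * Y) with hb
  have a0 : ∀ h, 0 < h → 0 < a h := fun h hh => by
    have := hεpos h hh
    simp only [ha]; positivity
  have b0 : ∀ h, 0 < h → 0 < b h := fun h hh => by
    have := hεpos h hh
    simp only [hb]; positivity
  set R : ℝ → ℝ := fun h => (∫ ω, (h ^ (1 / Y) * S ω) ^ (2 * k) *
            ind (ε h) (σ * (√h * W ω) + h ^ (1 / Y) * S ω + h * γ₀) ∂P)
        - ((Cp + Cm) / (2 * k - Y) * h * ε h ^ (2 * (k : ℝ) - Y)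
            + σ ^ 2 * (Cp + Cm) * (2 * k - 1 - Y) / 2 * h ^ 2 * ε h ^ (2 * (k : ℝ) - Y - 2)) with hR
  have hev : ∀ᶠ h in 𝓝[>] (0 : ℝ), 0 < h ∧ |R h| ≤ C * (a h + b h) := by
    have e1 : ∀ᶠ h in 𝓝[>] (0 : ℝ), h ≤ 1 :=
      nhdsWithin_le_nhds (Iic_mem_nhds one_pos)
    have e2 : ∀ᶠ h in 𝓝[>] (0 : ℝ), ε h ≤ 1 := hε0.eventually (Iic_mem_nhds one_pos)
    filter_upwards [self_mem_nhdsWithin, e1, e2, hεsqrt.eventually_ge_atTop 1] with h hh h1 h2 h3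
    have hh' : 0 < h := hh
    refine ⟨hh', hq h (ε h) hh' h1 (hεpos h hh') h2 ?_⟩
    rw [le_div_iff₀ (Real.sqrt_pos.2 hh'), one_mul] at h3
    exact (Real.sqrt_le_left (hεpos h hh').le).1 h3
  refine ⟨fun h => R h * (a h / (a h + b h)), fun h => R h * (b h / (a h + b h)), fun _ => 0,
    fun h hh => ?_, ?_, ?_, isBigO_zero _ _⟩
  · have := a0 h hh
    have := b0 h hh
    have e : R h * (a h / (a h + b h)) + R h * (b h / (a h + b h)) = R h := by
      field_simp
    have e' : (∫ ω, (h ^ (1 / Y) * S ω) ^ (2 * k) *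
            Set.indicator {x : ℝ | |x| ≤ ε h} (fun _ => (1 : ℝ))
              (σ * (Real.sqrt h * W ω) + h ^ (1 / Y) * S ω + h * γ₀) ∂P) =
        R h + ((Cp + Cm) / (2 * k - Y) * h * ε h ^ (2 * (k : ℝ) - Y)
            + σ ^ 2 * (Cp + Cm) * (2 * k - 1 - Y) / 2 * h ^ 2 * ε h ^ (2 * (k : ℝ) - Y - 2)) := by
      simp only [hR, ind]; ring
    rw [e']
    linarith
  · refine IsBigO.of_bound C ?_
    filter_upwards [hev] with h hh
    have ha' := a0 h hh.1
    have hb' := b0 h hh.1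
    rw [Real.norm_eq_abs, Real.norm_eq_abs, abs_mul, abs_of_pos ha', abs_of_pos (by positivity : 0 < a h / (a h + b h))]
    calc |R h| * (a h / (a h + b h)) ≤ C * (a h + b h) * (a h / (a h + b h)) := by gcongr; exact hh.2
      _ = C * a h := by field_simp
  · refine IsBigO.of_bound C ?_
    filter_upwards [hev] with h hh
    have ha' := a0 h hh.1
    have hb' := b0 h hh.1
    rw [Real.norm_eq_abs, Real.norm_eq_abs, abs_mul, abs_of_pos hb', abs_of_pos (by positivity : 0 < b h / (a h + b h))]
    calc |R h| * (b h / (a h + b h)) ≤ C * (a h + b h) * (b h / (a h + b h)) := by gcongr; exact hh.2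
      _ = C * b h := by field_simp

end
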